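/- arXiv:math/0503343 — 2 statements merged into one kernel-verified Lean document; each statement's English description precedes it below -/
import Mathlib

section
/- Under the hypotheses of the scaling-function theorem (C repelling; r and #r⁻¹ continuous at the points of C; m_0 β-Lipschitz at the points of C satisfying the quadrature and low-pass conditions), assume in addition that r is averaging with respect to ρ and that |m_0| ≠ 1 on a set of positive ρ-measure. With V_0 = closure in L²(X_∞, λ_C) of {π(f)φ̂ : f ∈ L^∞(X, ρ)} and V_n = U^{-n} V_0, one has ⋂_{n∈ℤ} V_n = {0}. -/
open MeasureTheory Filter Topology ENNReal

noncomputable section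

abbrev Solenoid {X : Type*} (r : X → X) : Type _ :=
  {z : ℤ → X // ∀ n : ℤ, r (z (n + 1)) = z n}

/-- The shift automorphism `r̂` on the solenoid, `(r̂ z) n = z (n-1)`. -/
def shiftHat {X : Type*} (r : X → X) (z : Solenoid r) : Solenoid r :=
  ⟨fun n => z.1 (n - 1), fun n => by
    have h := z.2 (n - 1)
    have h1 : n - 1 + 1 = n := by ring
    rw [h1] at h
    show r (z.1 (n + 1 - 1)) = z.1 (n - 1)
    have h2 : n + 1 - 1 = n := by ring
    rw [h2]
    exact h⟩

/-- The inverse of the shift automorphism `r̂`. -/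
def shiftHatInv {X : Type*} (r : X → X) (z : Solenoid r) : Solenoid r :=
  ⟨fun n => z.1 (n + 1), fun n => z.2 (n + 1)⟩

/-- Integer powers `r̂^n` of the shift automorphism. -/
def shiftHatZ {X : Type*} (r : X → X) : ℤ → Solenoid r → Solenoid r
  | Int.ofNat n => (shiftHat r)^[n]
  | Int.negSucc n => (shiftHatInv r)^[n + 1]

/-- The function `𝔠(z) = #r⁻¹(r(z₀))` on the solenoid. -/
def cFun {X : Type*} (r : X → X) (z : Solenoid r) : ℝ :=
  Nat.card (r ⁻¹' {r (z.1 0)})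

/-- The cocycle `𝔠⁽ⁿ⁾`: `𝔠⁽⁰⁾ = 1`, `𝔠⁽ⁿ⁾ = 𝔠 ⋯ (𝔠∘r̂^{n-1})` for `n ≥ 1`, and
`𝔠⁽⁻ⁿ⁾ = 1/((𝔠∘r̂⁻¹) ⋯ (𝔠∘r̂⁻ⁿ))` for `n ≥ 1`. -/
def cPow {X : Type*} (r : X → X) : ℤ → Solenoid r → ℝ
  | Int.ofNat n => fun z => ∏ k ∈ Finset.range n, cFun r (shiftHatZ r (k : ℤ) z)
  | Int.negSucc n => fun z =>
      (∏ k ∈ Finset.range (n + 1), cFun r (shiftHatZ r (-(k + 1) : ℤ) z))⁻¹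

/-- The set `N_C(x)` of paths starting at `x` converging to the cycle `C = {xc i}`. -/
def NC {X : Type*} [TopologicalSpace X] (r : X → X) {p : ℕ} (xc : ZMod p → X) (x : X) :
    Set (Solenoid r) :=
  {z | z.1 0 = x ∧ ∃ i : ZMod p, Tendsto (fun n : ℕ => z.1 ((p : ℤ) * (n : ℤ))) atTop (𝓝 (xc i))}

/-- The scaling function `φ̂(x, (z_k)) = ∏_{k=1}^∞ α_{i(ω)+k}⁻¹ m₀(z_k) / √(#r⁻¹(r z_k))`. -/
def scalingFn {X : Type*} (r : X → X) {p : ℕ} (α : ZMod p → ℂ) (ι : Solenoid r → ZMod p)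
    (m0 : X → ℂ) (z : Solenoid r) : ℂ :=
  ∏' k : ℕ, (α (ι z + ((k + 1 : ℕ) : ZMod p)))⁻¹ * m0 (z.1 ((k : ℤ) + 1)) /
    (Real.sqrt (Nat.card (r ⁻¹' {r (z.1 ((k : ℤ) + 1))})) : ℂ)

/-- `r` is averaging w.r.t. `ν`: every function in `L¹(ν)` which is measurable with respect to
`𝔅_∞ = ⋂ₙ r⁻ⁿ(𝔅)` is `ν`-a.e. constant. -/
def Averaging {X : Type*} [MeasurableSpace X] (r : X → X)
    (ν : MeasureTheory.Measure X) : Prop :=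
  ∀ g : X → ℝ,
    Measurable[⨅ n : ℕ, MeasurableSpace.comap (r^[n]) inferInstance] g →
    MeasureTheory.Integrable g ν → ∃ c : ℝ, g =ᵐ[ν] fun _ => c

lemma aux_proj {E : Type*} [NormedAddCommGroup E] [InnerProductSpace ℝ E] [CompleteSpace E]
    (K : ℕ → Submodule ℝ E) [∀ n, (K n).HasOrthogonalProjection]
    (hcl : ∀ n, IsClosed (K n : Set E)) (hK : Antitone K) (x : E) :
    ∃ l : E, (∀ n, l ∈ K n) ∧ Tendsto (fun n => (K n).starProjection x) atTop (𝓝 l) := by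
  have hmono : Monotone fun n => (K n)ᗮ := fun a b hab => Submodule.orthogonal_le (hK hab)
  have h1 := Submodule.starProjection_tendsto_closure_iSup (fun n => (K n)ᗮ) hmono x
  have h2 : Tendsto (fun n => (K n).starProjection x) atTop
      (𝓝 (x - (⨆ i, (K i)ᗮ).topologicalClosure.starProjection x)) := by
    refine (tendsto_const_nhds.sub h1).congr fun n => ?_
    simp [Submodule.starProjection_orthogonal_val]
  refine ⟨_, fun m => ?_, h2⟩
  refine (hcl m).mem_of_tendsto h2 ?_
  filter_upwards [eventually_ge_atTop m] with n hn
  exact hK hn (Submodule.starProjection_apply_mem _ _)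

lemma aux_const {X : Type*} [MeasurableSpace X] {r : X → X} (hr : Measurable r)
    (ρ : Measure X) (hav : Averaging r ρ) (l : X → ℝ) (hl : Integrable l ρ)
    (h : ∀ n : ℕ, AEStronglyMeasurable[MeasurableSpace.comap (r^[n]) inferInstance] l ρ) :
    ∃ c : ℝ, l =ᵐ[ρ] fun _ => c := by
  choose g hg hlg using h
  let G : X → ℝ := fun x => limsup (fun n => g n x) atTop
  have hanti : ∀ m n : ℕ, MeasurableSpace.comap (r^[m + n]) inferInstance ≤
      MeasurableSpace.comap (r^[n]) (inferInstance : MeasurableSpace X) := by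
    intro m n
    rw [Function.iterate_add, ← MeasurableSpace.comap_comp]
    exact MeasurableSpace.comap_mono (hr.iterate m).comap_le
  have hG : Measurable[⨅ n : ℕ, MeasurableSpace.comap (r^[n]) inferInstance] G := by
    intro s hs
    rw [MeasurableSpace.measurableSet_iInf]
    intro n
    have : G = fun x => limsup (fun m => g (m + n) x) atTop := by
      funext x
      exact (limsup_nat_add (fun m => g m x) n).symm
    rw [this]
    have hm : Measurable[MeasurableSpace.comap (r^[n]) inferInstance]
        (fun x => limsup (fun m => g (m + n) x) atTop) := by
      let _ : MeasurableSpace X := MeasurableSpace.comap (r^[n]) inferInstance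
      refine Measurable.limsup ?_
      intro m
      exact (hg (m + n)).measurable.mono (hanti m n) le_rfl
    exact hm hs
  have hae : l =ᵐ[ρ] G := by
    filter_upwards [ae_all_iff.2 hlg] with x hx
    show l x = limsup (fun n => g n x) atTop
    have : (fun n => g n x) = fun _ => l x := by funext n; exact (hx n).symm
    rw [this]; simp
  obtain ⟨c, hc⟩ := hav G hG (hl.congr hae)
  exact ⟨c, hae.trans hc⟩

lemma aux_mix2 {X : Type*} [MeasurableSpace X] {r : X → X}
    (ρ : Measure X) [IsProbabilityMeasure ρ] (hmp : MeasurePreserving r ρ ρ)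
    (hav : Averaging r ρ) (G b : X → ℝ) (hG : MemLp G 2 ρ) (hb : MemLp b 2 ρ) :
    Tendsto (fun n : ℕ => ∫ x, G x * b (r^[n] x) ∂ρ) atTop (𝓝 ((∫ x, G x ∂ρ) * ∫ x, b x ∂ρ)) := by
  have hr := hmp.measurable
  let m : ℕ → MeasurableSpace X := fun n => MeasurableSpace.comap (r^[n]) inferInstance
  have hm : ∀ n, m n ≤ (inferInstance : MeasurableSpace X) := fun n => (hr.iterate n).comap_le
  have hanti : Antitone m := by
    refine antitone_nat_of_succ_le fun n => ?_
    show MeasurableSpace.comap (r^[n+1]) _ ≤ MeasurableSpace.comap (r^[n]) _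
    rw [Function.iterate_succ', ← MeasurableSpace.comap_comp]
    exact MeasurableSpace.comap_mono hr.comap_le
  let K : ℕ → Submodule ℝ (Lp ℝ 2 ρ) := fun n => lpMeas ℝ ℝ (m n) 2 ρ
  have hKc : ∀ n, IsClosed (K n : Set (Lp ℝ 2 ρ)) := fun n => isClosed_aestronglyMeasurable (hm n)
  have : ∀ n, CompleteSpace (K n) := fun n => (hKc n).isComplete.completeSpace_coe
  have hK : Antitone K := by
    intro a b hab f hf
    rw [mem_lpMeas_iff_aestronglyMeasurable] at hf ⊢
    exact hf.mono (hanti hab)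
  obtain ⟨l, hl, hlt⟩ := aux_proj K hKc hK (hG.toLp G)
  obtain ⟨c, hc⟩ := aux_const hr ρ hav l ((Lp.memLp l).integrable (by norm_num))
    (fun n => mem_lpMeas_iff_aestronglyMeasurable.1 (hl n))
  have hbn : ∀ n, MemLp (fun x => b (r^[n] x)) 2 ρ := fun n =>
    hb.comp_measurePreserving (hmp.iterate n)
  let B : ℕ → Lp ℝ 2 ρ := fun n => (hbn n).toLp _
  have hBK : ∀ n, B n ∈ K n := by
    intro n
    rw [mem_lpMeas_iff_aestronglyMeasurable]
    obtain ⟨b', hb', hbb'⟩ := hb.1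
    refine ⟨fun x => b' (r^[n] x), ?_, ?_⟩
    · exact hb'.comp_measurable (comap_measurable (r^[n]))
    · exact ((hbn n).coeFn_toLp).trans ((hmp.iterate n).quasiMeasurePreserving.ae_eq_comp hbb')
  have hBnorm : ∀ n, ‖B n‖ = ‖hb.toLp b‖ := by
    intro n
    rw [Lp.norm_toLp, Lp.norm_toLp]
    congr 1
    exact eLpNorm_comp_measurePreserving hb.1 (hmp.iterate n)
  have key : ∀ n, ∀ f : X → ℝ, ∀ hf : MemLp f 2 ρ,
      inner ℝ (B n) (hf.toLp f) = ∫ x, f x * b (r^[n] x) ∂ρ := by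
    intro n f hf
    rw [L2.inner_def]
    refine integral_congr_ae ?_
    filter_upwards [(hbn n).coeFn_toLp, hf.coeFn_toLp] with x h1 h2
    simp only [B] at *
    rw [h1, h2]
    simp
  have hint : ∀ n, ∫ x, b (r^[n] x) ∂ρ = ∫ x, b x ∂ρ := by
    intro n
    have := (hmp.iterate n).map_eq
    conv_rhs => rw [← this]
    rw [integral_map (hr.iterate n).aemeasurable (by rw [this]; exact hb.1)]
  have hcl : MemLp (fun _ : X => c) 2 ρ := memLp_const c
  have hl' : l = hcl.toLp _ := by
    apply Lp.ext
    exact hc.trans hcl.coeFn_toLp.symm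
  have hBl : ∀ n, inner ℝ (B n) l = c * ∫ x, b x ∂ρ := by
    intro n
    rw [hl', key n _ hcl, integral_const_mul, hint]
  have hinP : ∀ n, inner ℝ (B n) (hG.toLp G) = inner ℝ (B n) ((K n).starProjection (hG.toLp G)) := by
    intro n
    have := Submodule.starProjection_inner_eq_zero (K := K n) (hG.toLp G) (B n) (hBK n)
    rw [real_inner_comm, inner_sub_right] at this
    linarith
  have hdiff : Tendsto (fun n => inner ℝ (B n) (hG.toLp G) - inner ℝ (B n) l) atTop (𝓝 0) := by
    have h0 : Tendsto (fun n => ‖hb.toLp b‖ * ‖(K n).starProjection (hG.toLp G) - l‖) atTop (𝓝 0) := by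
      have := (tendsto_iff_norm_sub_tendsto_zero.1 hlt).const_mul (‖hb.toLp b‖)
      simpa using this
    refine squeeze_zero_norm (fun n => ?_) h0
    rw [hinP, ← inner_sub_right, ← hBnorm n]
    exact norm_inner_le_norm _ _
  have hlim : Tendsto (fun n : ℕ => ∫ x, G x * b (r^[n] x) ∂ρ) atTop (𝓝 (c * ∫ x, b x ∂ρ)) := by
    have := hdiff.add_const (c * ∫ x, b x ∂ρ)
    rw [zero_add] at this
    refine this.congr fun n => ?_
    rw [hBl, key n G hG]; ring
  -- identify c
  have hcG : c = ∫ x, G x ∂ρ := by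
    have h1m : MemLp (fun _ : X => (1:ℝ)) 2 ρ := memLp_const 1
    have e1 : ∀ f : X → ℝ, ∀ hf : MemLp f 2 ρ,
        inner ℝ (h1m.toLp _) (hf.toLp f) = ∫ x, f x ∂ρ := by
      intro f hf
      rw [L2.inner_def]
      refine integral_congr_ae ?_
      filter_upwards [h1m.coeFn_toLp, hf.coeFn_toLp] with x h1 h2
      rw [h1, h2]
      simp
    have h1K : ∀ n, h1m.toLp _ ∈ K n := by
      intro n
      rw [mem_lpMeas_iff_aestronglyMeasurable]
      exact ⟨fun _ => 1, @stronglyMeasurable_const _ _ (m n) _ _, h1m.coeFn_toLp⟩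
    have e2 : ∀ n, inner ℝ (h1m.toLp _) ((K n).starProjection (hG.toLp G)) = ∫ x, G x ∂ρ := by
      intro n
      have := Submodule.starProjection_inner_eq_zero (K := K n) (hG.toLp G) _ (h1K n)
      rw [real_inner_comm, inner_sub_right, e1] at this
      linarith
    have e3 : Tendsto (fun n => inner ℝ (h1m.toLp _) ((K n).starProjection (hG.toLp G))) atTop
        (𝓝 (inner ℝ (h1m.toLp _) l)) := tendsto_const_nhds.inner hlt
    simp only [e2] at e3
    have e4 := tendsto_nhds_unique e3 tendsto_const_nhds
    rw [hl', e1] at e4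
    simpa using e4
  rw [← hcG]; exact hlim

lemma aux_mix1 {X : Type*} [MeasurableSpace X] {r : X → X}
    (ρ : Measure X) [IsProbabilityMeasure ρ] (hmp : MeasurePreserving r ρ ρ)
    (hav : Averaging r ρ) (G b : X → ℝ) (hG : Integrable G ρ) (hbm : Measurable b)
    (hb : ∀ x, ‖b x‖ ≤ 1) :
    Tendsto (fun n : ℕ => ∫ x, G x * b (r^[n] x) ∂ρ) atTop (𝓝 ((∫ x, G x ∂ρ) * ∫ x, b x ∂ρ)) := by
  have hr := hmp.measurable
  have hb2 : MemLp b 2 ρ := MemLp.of_bound hbm.aestronglyMeasurable 1 (.of_forall hb)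
  have hbound : ∀ f : X → ℝ, Integrable f ρ → ∀ n : ℕ,
      ‖∫ x, f x * b (r^[n] x) ∂ρ‖ ≤ ∫ x, ‖f x‖ ∂ρ := by
    intro f hf n
    refine norm_integral_le_of_norm_le hf.norm (.of_forall fun x => ?_)
    rw [norm_mul]
    exact mul_le_of_le_one_right (norm_nonneg _) (hb _)
  have hintm : ∀ f : X → ℝ, Integrable f ρ → ∀ n : ℕ, Integrable (fun x => f x * b (r^[n] x)) ρ := by
    intro f hf n
    exact hf.mul_bdd (c := 1) (hbm.comp (hr.iterate n)).aestronglyMeasurable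
      (.of_forall fun x => hb _)
  have hb1 : ‖∫ x, b x ∂ρ‖ ≤ 1 := by
    have := norm_integral_le_of_norm_le_const (μ := ρ) (.of_forall hb)
    simpa using this
  rw [Metric.tendsto_atTop]
  intro ε hε
  obtain ⟨g, hg, hgm⟩ := (memLp_one_iff_integrable.2 hG).exists_simpleFunc_eLpNorm_sub_lt
    (by norm_num) (ε := ENNReal.ofReal (ε / 3)) (by simpa using hε)
  have hgi : Integrable g ρ := memLp_one_iff_integrable.1 hgm
  have hd : ∫ x, ‖G x - g x‖ ∂ρ < ε / 3 := by
    have h1 := eLpNorm_one_eq_lintegral_enorm (μ := ρ) (f := G - ⇑g)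
    rw [h1] at hg
    have h2 := integral_norm_eq_lintegral_enorm (hG.sub hgi).1
    simp only [Pi.sub_apply] at h2 hg
    rw [h2]
    exact ENNReal.toReal_lt_of_lt_ofReal hg
  have hg2 : MemLp g 2 ρ := g.memLp_of_isFiniteMeasure 2 ρ
  obtain ⟨N, hN⟩ := Metric.tendsto_atTop.1 (aux_mix2 ρ hmp hav g b hg2 hb2) (ε / 3) (by positivity)
  refine ⟨N, fun n hn => ?_⟩
  have h1 := hN n hn
  have h2 := (hbound _ (hG.sub hgi) n).trans_lt hd
  simp only [Pi.sub_apply, sub_mul] at h2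
  rw [integral_sub (hintm _ hG n) (hintm _ hgi n)] at h2
  have h3 : ‖((∫ x, G x ∂ρ) - ∫ x, g x ∂ρ) * ∫ x, b x ∂ρ‖ < ε / 3 := by
    rw [norm_mul]
    refine lt_of_le_of_lt (mul_le_of_le_one_right (norm_nonneg _) hb1) ?_
    rw [← integral_sub hG hgi]
    exact (norm_integral_le_integral_norm _).trans_lt hd
  rw [Real.dist_eq] at h1 ⊢
  rw [Real.norm_eq_abs] at h2 h3
  rw [abs_lt] at *
  constructor <;> nlinarith [h1.1, h1.2, h2.1, h2.2, h3.1, h3.2]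

lemma aux_mix {X : Type*} [MeasurableSpace X] {r : X → X}
    (ρ : Measure X) [IsProbabilityMeasure ρ] (hmp : MeasurePreserving r ρ ρ)
    (hav : Averaging r ρ) (ν : Measure X) [IsFiniteMeasure ν] (hν : ν ≪ ρ)
    (b : X → ℝ≥0∞) (hbm : Measurable b) (hb : ∀ x, b x ≤ 1) :
    Tendsto (fun n : ℕ => ∫⁻ x, b (r^[n] x) ∂ν) atTop (𝓝 (ν Set.univ * ∫⁻ x, b x ∂ρ)) := by
  have hr := hmp.measurable
  have h := aux_mix1 ρ hmp hav (fun x => (ν.rnDeriv ρ x).toReal) (fun x => (b x).toReal)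
    Measure.integrable_toReal_rnDeriv hbm.ennreal_toReal (fun x => by
      rw [Real.norm_of_nonneg ENNReal.toReal_nonneg]
      exact ENNReal.toReal_le_of_le_ofReal zero_le_one (by simpa using hb x))
  have h' := (ENNReal.continuous_ofReal.tendsto _).comp h
  have e1 : ∀ n : ℕ, ENNReal.ofReal (∫ x, (ν.rnDeriv ρ x).toReal * (b (r^[n] x)).toReal ∂ρ)
      = ∫⁻ x, b (r^[n] x) ∂ν := by
    intro n
    have h0 := integral_rnDeriv_smul (f := fun x => (b (r^[n] x)).toReal) hν
    simp only [smul_eq_mul] at h0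
    rw [h0]
    rw [integral_toReal (f := fun x => b (r^[n] x)) (hbm.comp (hr.iterate n)).aemeasurable
      (.of_forall fun x => (hb _).trans_lt one_lt_top), ENNReal.ofReal_toReal]
    refine ne_of_lt (lt_of_le_of_lt (lintegral_mono (fun x => hb _)) ?_)
    simp
  have e2 : ENNReal.ofReal ((∫ x, (ν.rnDeriv ρ x).toReal ∂ρ) * ∫ x, (b x).toReal ∂ρ)
      = ν Set.univ * ∫⁻ x, b x ∂ρ := by
    rw [Measure.integral_toReal_rnDeriv hν, ENNReal.ofReal_mul (by positivity)]
    rw [integral_toReal hbm.aemeasurable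
      (.of_forall fun x => (hb _).trans_lt one_lt_top), ENNReal.ofReal_toReal]
    · simp
    refine ne_of_lt (lt_of_le_of_lt (lintegral_mono (fun x => hb _)) ?_)
    simp
  rw [e2] at h'
  exact h'.congr e1

lemma aux_wd {X : Type*} [MeasurableSpace X] {μ : Measure X} {f g : X → ℝ≥0∞}
    (hf : Measurable f) (hg : Measurable g) :
    ∫⁻ x, g x ∂(μ.withDensity f) = ∫⁻ x, f x * g x ∂μ :=
  lintegral_withDensity_eq_lintegral_mul _ hf hg

lemma aux_jensen {X : Type*} [MeasurableSpace X] {r : X → X}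
    (ρ : Measure X) [IsProbabilityMeasure ρ] (hmp : MeasurePreserving r ρ ρ)
    (u : X → ℝ) (hu : Measurable u) (hu0 : ∀ x, 0 ≤ u x)
    (hq : (ρ.withDensity (fun x => ENNReal.ofReal (u x))).map r = ρ)
    (H : X → ℝ) (hH : Measurable H) (hH0 : ∀ x, 0 ≤ H x)
    (hHi : ∫⁻ x, ENNReal.ofReal (H x) ∂ρ ≠ ⊤)
    (hHp : ∀ᵐ x ∂ρ, 0 < H x)
    (heq : ∀ᵐ x ∂ρ, H (r x) = u x * H x) : ∀ᵐ x ∂ρ, u x = 1 := by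
  have hr := hmp.measurable
  have i1 : ∫⁻ x, ENNReal.ofReal (H (r x)) ∂ρ = ∫⁻ x, ENNReal.ofReal (H x) ∂ρ :=
    hmp.lintegral_comp hH.ennreal_ofReal
  have i2 : ∫⁻ x, ENNReal.ofReal (H (r x) * u x) ∂ρ = ∫⁻ x, ENNReal.ofReal (H x) ∂ρ := by
    conv_rhs => rw [← hq]
    rw [lintegral_map hH.ennreal_ofReal hr,
      aux_wd (g := fun x => ENNReal.ofReal (H (r x))) hu.ennreal_ofReal (hH.comp hr).ennreal_ofReal]
    refine lintegral_congr fun x => ?_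
    rw [← ENNReal.ofReal_mul (hu0 x), mul_comm]
  have i3 : ∫⁻ x, ENNReal.ofReal (H x * (u x - 1) ^ 2) ∂ρ
      + (∫⁻ x, ENNReal.ofReal (H x) ∂ρ + ∫⁻ x, ENNReal.ofReal (H x) ∂ρ) =
      ∫⁻ x, ENNReal.ofReal (H x) ∂ρ + ∫⁻ x, ENNReal.ofReal (H x) ∂ρ := by
    conv_lhs => rw [← i1]
    conv_rhs => congr; rw [← i2]
    have hHr : Measurable fun x => H (r x) := hH.comp hr
    rw [← lintegral_add_left (by fun_prop), ← lintegral_add_left (by fun_prop),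
      ← lintegral_add_left (by fun_prop)]
    refine lintegral_congr_ae ?_
    filter_upwards [heq] with x hx
    rw [← ENNReal.ofReal_add (hH0 _) (hH0 _), ← ENNReal.ofReal_add
      (mul_nonneg (hH0 _) (sq_nonneg _)) (add_nonneg (hH0 _) (hH0 _)),
      ← ENNReal.ofReal_add (mul_nonneg (hH0 _) (hu0 _)) (hH0 _), hx]
    congr 1; ring
  have i4 : ∫⁻ x, ENNReal.ofReal (H x * (u x - 1) ^ 2) ∂ρ = 0 := by
    have hfin : ∫⁻ x, ENNReal.ofReal (H x) ∂ρ + ∫⁻ x, ENNReal.ofReal (H x) ∂ρ ≠ ⊤ :=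
      ENNReal.add_ne_top.2 ⟨hHi, hHi⟩
    have : ∫⁻ x, ENNReal.ofReal (H x * (u x - 1) ^ 2) ∂ρ
      + (∫⁻ x, ENNReal.ofReal (H x) ∂ρ + ∫⁻ x, ENNReal.ofReal (H x) ∂ρ) =
      0 + (∫⁻ x, ENNReal.ofReal (H x) ∂ρ + ∫⁻ x, ENNReal.ofReal (H x) ∂ρ) := by
      rw [i3, zero_add]
    exact (ENNReal.add_left_inj hfin).1 this
  rw [lintegral_eq_zero_iff (by fun_prop)] at i4
  filter_upwards [i4, hHp] with x h1 h2
  have h3 : H x * (u x - 1) ^ 2 ≤ 0 := by simpa using h1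
  have h4 : (u x - 1) ^ 2 ≤ 0 := by
    by_contra hc
    push Not at hc
    nlinarith [mul_pos h2 hc]
  nlinarith [pow_eq_zero_iff (two_ne_zero) |>.1 (le_antisymm h4 (sq_nonneg (u x - 1)))]

lemma aux_final {X : Type*} [MeasurableSpace X] {r : X → X}
    (ρ : Measure X) [IsProbabilityMeasure ρ] (hmp : MeasurePreserving r ρ ρ)
    (hav : Averaging r ρ) (u : X → ℝ) (hu : Measurable u) (hu0 : ∀ x, 0 ≤ u x)
    (hq : (ρ.withDensity (fun x => ENNReal.ofReal (u x))).map r = ρ)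
    (νφ : Measure X) [IsFiniteMeasure νφ] (hφ : νφ ≪ ρ)
    (ν : ℕ → Measure X) [∀ n, IsFiniteMeasure (ν n)] (hν : ∀ n, ν n ≪ ρ)
    (f : ℕ → X → ℝ≥0∞) (hf : ∀ n, Measurable (f n))
    (h1 : ∀ n, ν n = νφ.withDensity (f n))
    (h2 : ∀ n, ν n = νφ.withDensity (fun x => f (n + 1) (r x) * ENNReal.ofReal (u x)))
    (h3 : ∀ n, (ν n).map r = ν (n + 1))
    (hne : ν 0 Set.univ ≠ 0) : ∀ᵐ x ∂ρ, u x = 1 := by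
  have hr := hmp.measurable
  let H : X → ℝ := fun x => (νφ.rnDeriv ρ x).toReal
  have hH : Measurable H := (Measure.measurable_rnDeriv _ _).ennreal_toReal
  have hH0 : ∀ x, 0 ≤ H x := fun x => ENNReal.toReal_nonneg
  let h : X → ℝ≥0∞ := fun x => ENNReal.ofReal (H x)
  have hh : Measurable h := hH.ennreal_ofReal
  have hφh : νφ = ρ.withDensity h := by
    conv_lhs => rw [← Measure.withDensity_rnDeriv_eq νφ ρ hφ]
    refine withDensity_congr_ae ?_
    filter_upwards [Measure.rnDeriv_ne_top νφ ρ] with x hx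
    exact (ENNReal.ofReal_toReal hx).symm
  have hHi : ∫⁻ x, ENNReal.ofReal (H x) ∂ρ ≠ ⊤ := by
    have : νφ Set.univ = ∫⁻ x, ENNReal.ofReal (H x) ∂ρ := by
      rw [hφh, withDensity_apply _ MeasurableSet.univ, Measure.restrict_univ]
    rw [← this]; exact measure_ne_top _ _
  have hiter : ∀ n, (ν 0).map (r^[n]) = ν n := by
    intro n
    induction n with
    | zero => simp
    | succ n ih =>
      rw [Function.iterate_succ', ← Measure.map_map hr (hr.iterate n), ih, h3]
  have lim1 : ∀ b : X → ℝ≥0∞, Measurable b → (∀ x, b x ≤ 1) →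
      Tendsto (fun n => ∫⁻ x, b x ∂(ν n)) atTop (𝓝 (ν 0 Set.univ * ∫⁻ x, b x ∂ρ)) := by
    intro b hbm hb
    refine (aux_mix ρ hmp hav (ν 0) (hν 0) b hbm hb).congr fun n => ?_
    rw [← hiter n, lintegral_map hbm (hr.iterate n)]
  have d1 : ∀ n, ν n = ρ.withDensity (fun x => f n x * h x) := by
    intro n
    rw [h1 n, hφh, ← withDensity_mul _ hh (hf n)]
    congr 1; funext x; simp [mul_comm]
  have lim2 : ∀ b : X → ℝ≥0∞, Measurable b → (∀ x, b x ≤ 1) →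
      Tendsto (fun n => ∫⁻ x, b x * (f (n + 1) (r x) * h (r x)) ∂ρ) atTop
        (𝓝 (ν 0 Set.univ * ∫⁻ x, b x ∂ρ)) := by
    intro b hbm hb
    let μ := (ρ.withDensity b).map r
    have hle0 : ρ.withDensity b ≤ ρ := by
      calc ρ.withDensity b ≤ ρ.withDensity 1 := withDensity_mono (.of_forall hb)
        _ = ρ := withDensity_one
    have hle : μ ≤ ρ := by
      calc μ ≤ ρ.map r := Measure.map_mono hle0 hr
        _ = ρ := hmp.map_eq
    have : IsFiniteMeasure μ := isFiniteMeasure_of_le ρ hle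
    let Lb : X → ℝ≥0∞ := fun x => min (μ.rnDeriv ρ x) 1
    have hLb : Measurable Lb := (Measure.measurable_rnDeriv _ _).min measurable_const
    have hμ : μ = ρ.withDensity Lb := by
      conv_lhs => rw [← Measure.withDensity_rnDeriv_eq μ ρ (Measure.absolutelyContinuous_of_le hle)]
      refine withDensity_congr_ae ?_
      filter_upwards [Measure.rnDeriv_le_one_of_le hle] with x hx
      exact (min_eq_left hx).symm
    have hi : ∀ g : X → ℝ≥0∞, Measurable g → ∫⁻ x, b x * g (r x) ∂ρ = ∫⁻ x, Lb x * g x ∂ρ := by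
      intro g hg
      have e1 : ∫⁻ x, g x ∂μ = ∫⁻ x, b x * g (r x) ∂ρ := by
        rw [lintegral_map hg hr, aux_wd (g := fun x => g (r x)) hbm (hg.comp hr)]
      rw [← e1, hμ, lintegral_withDensity_eq_lintegral_mul _ hLb hg]
      rfl
    have e1 := (lim1 Lb hLb (fun x => min_le_right _ _)).comp (tendsto_add_atTop_nat 1)
    have e2 : ∫⁻ x, Lb x ∂ρ = ∫⁻ x, b x ∂ρ := by
      simpa using (hi (fun _ => 1) measurable_const).symm
    rw [e2] at e1
    refine e1.congr fun n => ?_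
    rw [hi (fun x => f (n+1) x * h x) ((hf _).mul hh)]
    simp only [Function.comp_apply]
    rw [d1 (n+1), aux_wd (f := fun x => f (n + 1) x * h x) ((hf _).mul hh) hLb]
    refine lintegral_congr fun x => ?_
    simp [mul_comm]
  have hc : ν 0 Set.univ ≠ ⊤ := measure_ne_top _ _
  have hhr : Measurable fun x => h (r x) := hh.comp hr
  have hHr : Measurable fun x => H (r x) := hH.comp hr
  -- positivity of H
  have hHp : ∀ᵐ x ∂ρ, 0 < H x := by
    let A : Set X := {x | h x = 0}
    have hA : MeasurableSet A := hh (measurableSet_singleton 0)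
    have l := lim1 (A.indicator 1) (measurable_one.indicator hA) (fun x => by
      by_cases hx : x ∈ A <;> simp [hx])
    have z : ∀ n, ∫⁻ x, A.indicator 1 x ∂(ν n) = 0 := by
      intro n
      rw [d1 n, aux_wd (f := fun x => f n x * h x) ((hf _).mul hh)
        (measurable_one.indicator hA)]
      refine (lintegral_congr fun x => ?_).trans lintegral_zero
      by_cases hx : x ∈ A
      · have : h x = 0 := hx
        simp [this]
      · simp [hx]
    simp only [z] at l
    have := tendsto_nhds_unique l tendsto_const_nhds
    rw [lintegral_indicator_one hA] at this
    have hA0 : ρ A = 0 := by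
      rcases mul_eq_zero.1 this with h | h
      · exact absurd h hne
      · exact h
    have : ∀ᵐ x ∂ρ, x ∉ A := measure_eq_zero_iff_ae_notMem.1 hA0
    filter_upwards [this] with x hx
    by_contra hcon
    exact hx (ENNReal.ofReal_eq_zero.2 (not_lt.1 hcon))
  -- the equation
  let w : X → ℝ≥0∞ := fun x => (1 + ENNReal.ofReal (H (r x) + u x * H x))⁻¹
  have hw : Measurable w := by fun_prop
  have hwle : ∀ x, ∀ t : ℝ, t ≤ H (r x) + u x * H x → w x * ENNReal.ofReal t ≤ 1 := by
    intro x t ht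
    calc w x * ENNReal.ofReal t ≤ w x * (1 + ENNReal.ofReal (H (r x) + u x * H x)) := by
          gcongr
          exact (ENNReal.ofReal_le_ofReal ht).trans le_add_self
      _ ≤ 1 := ENNReal.inv_mul_le_one _
  have heq : ∀ᵐ x ∂ρ, H (r x) = u x * H x := by
    have key : (fun x => w x * ENNReal.ofReal (H (r x))) =ᵐ[ρ]
        fun x => w x * ENNReal.ofReal (u x * H x) := by
      refine ae_eq_of_forall_setLIntegral_eq_of_sigmaFinite (by fun_prop) (by fun_prop) ?_
      intro A hA _
      have l1 := lim1 (A.indicator fun x => w x * ENNReal.ofReal (H (r x)))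
        (Measurable.indicator (by fun_prop) hA) (fun x => by
          by_cases hx : x ∈ A
          · simp only [hx, Set.indicator_of_mem]
            exact hwle x _ (le_add_of_nonneg_right (mul_nonneg (hu0 x) (hH0 x)))
          · simp [hx])
      have l2 := lim2 (A.indicator fun x => w x * ENNReal.ofReal (u x * H x))
        (Measurable.indicator (by fun_prop) hA) (fun x => by
          by_cases hx : x ∈ A
          · simp only [hx, Set.indicator_of_mem]
            exact hwle x _ (le_add_of_nonneg_left (hH0 _))
          · simp [hx])
      have e : ∀ n, ∫⁻ x, (A.indicator fun x => w x * ENNReal.ofReal (H (r x))) x ∂(ν n) =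
          ∫⁻ x, (A.indicator fun x => w x * ENNReal.ofReal (u x * H x)) x *
            (f (n + 1) (r x) * h (r x)) ∂ρ := by
        intro n
        have hfr : Measurable fun x => f (n+1) (r x) := (hf (n+1)).comp hr
        have d2 : ν n = ρ.withDensity (fun x => h x * (f (n + 1) (r x) * ENNReal.ofReal (u x))) := by
          rw [h2 n, hφh, ← withDensity_mul _ hh (by fun_prop)]
          rfl
        rw [d2, lintegral_withDensity_eq_lintegral_mul _ (by fun_prop)
          (Measurable.indicator (by fun_prop) hA)]
        refine lintegral_congr fun x => ?_
        by_cases hx : x ∈ A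
        · simp only [Pi.mul_apply, hx, Set.indicator_of_mem, h]
          rw [ENNReal.ofReal_mul (hu0 x)]
          ring
        · simp [hx]
      simp only [e] at l1
      have := tendsto_nhds_unique l1 l2
      rw [lintegral_indicator hA, lintegral_indicator hA] at this
      exact (ENNReal.mul_right_inj hne hc).1 this
    filter_upwards [key] with x hx
    have hw0 : w x ≠ 0 := ENNReal.inv_ne_zero.2 (by simp)
    have hw1 : w x ≠ ⊤ := ENNReal.inv_ne_top.2 (by simp)
    have := (ENNReal.mul_right_inj hw0 hw1).1 hx
    exact (ENNReal.ofReal_eq_ofReal_iff (hH0 _) (mul_nonneg (hu0 x) (hH0 x))).1 this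
  exact aux_jensen ρ hmp u hu hu0 hq H hH hH0 hHi hHp heq

lemma aux_tail {X : Type*} [TopologicalSpace X] {r : X → X} {p : ℕ} {xc : ZMod p → X}
    (hcyc : ∀ i : ZMod p, r (xc (i + 1)) = xc i)
    (hrc : ∀ i : ZMod p, ContinuousAt r (xc i)) (z : Solenoid r) (i : ZMod p)
    (hz : Tendsto (fun n : ℕ => z.1 ((p : ℤ) * (n : ℤ))) atTop (𝓝 (xc i))) (j : ℕ) :
    Tendsto (fun n : ℕ => z.1 ((p : ℤ) * (n : ℤ) - j)) atTop (𝓝 (xc (i - j))) := by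
  induction j with
  | zero => simpa using hz
  | succ j ih =>
    have h1 := (hrc (i - j)).tendsto.comp ih
    have h2 : r (xc (i - j)) = xc (i - ((j + 1 : ℕ) : ZMod p)) := by
      have := hcyc (i - ((j + 1 : ℕ) : ZMod p))
      rw [← this]; congr 2; push_cast; ring
    rw [h2] at h1
    refine h1.congr fun n => ?_
    have := z.2 ((p : ℤ) * (n : ℤ) - ((j + 1 : ℕ) : ℤ))
    simp only [Function.comp_apply]
    rw [← this]; congr 2; push_cast; ring

lemma aux_shift_mem {X : Type*} [TopologicalSpace X] {r : X → X} {p : ℕ} {xc : ZMod p → X}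
    (hcyc : ∀ i : ZMod p, r (xc (i + 1)) = xc i)
    (hrc : ∀ i : ZMod p, ContinuousAt r (xc i)) (z : Solenoid r) (x : X) (hz : z ∈ NC r xc x) :
    shiftHat r z ∈ NC r xc (r x) := by
  obtain ⟨h0, i, hi⟩ := hz
  refine ⟨?_, i - ((1 : ℕ) : ZMod p), ?_⟩
  · show z.1 (0 - 1) = r x
    have := z.2 (-1)
    rw [← h0]
    simpa using this.symm
  · exact aux_tail hcyc hrc z i hi 1

lemma aux_iota {X : Type*} [TopologicalSpace X] [T2Space X] {r : X → X} {p : ℕ} {xc : ZMod p → X}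
    (hxc : Function.Injective xc)
    (hcyc : ∀ i : ZMod p, r (xc (i + 1)) = xc i)
    (hrc : ∀ i : ZMod p, ContinuousAt r (xc i))
    (ι : Solenoid r → ZMod p)
    (hι : ∀ x : X, ∀ ω ∈ NC r xc x,
      Tendsto (fun n : ℕ => ω.1 ((p : ℤ) * (n : ℤ))) atTop (𝓝 (xc (ι ω))))
    (z : Solenoid r) (x : X) (hz : z ∈ NC r xc x) : ι (shiftHat r z) = ι z - 1 := by
  have h1 := hι (r x) _ (aux_shift_mem hcyc hrc z x hz)
  have h2 := aux_tail hcyc hrc z (ι z) (hι x z hz) 1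
  have h3 := hxc (tendsto_nhds_unique h1 h2)
  simpa using h3

lemma aux_iter {X : Type*} {r : X → X} (z : Solenoid r) (k : ℤ) (n : ℕ) :
    r^[n] (z.1 (k + n)) = z.1 k := by
  induction n generalizing k with
  | zero => simp
  | succ n ih =>
    rw [Function.iterate_succ_apply]
    have := z.2 (k + n)
    have e : k + ((n + 1 : ℕ) : ℤ) = k + n + 1 := by push_cast; ring
    rw [e, this, ih]

lemma aux_card {X : Type*} {r : X → X}
    (hfin : ∀ x : X, (r ⁻¹' {x}).Finite) (hne : ∀ x : X, (r ⁻¹' {x}).Nonempty) (x : X) :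
    1 ≤ Real.sqrt (Nat.card (r ⁻¹' {x})) := by
  have : Finite (r ⁻¹' {x}) := hfin x
  have : Nonempty (r ⁻¹' {x}) := (hne x).to_subtype
  have h : 0 < Nat.card (r ⁻¹' {x}) := Nat.card_pos
  rw [Real.one_le_sqrt]
  exact_mod_cast h

lemma aux_mult {X : Type*} [MetricSpace X]
    {r : X → X} (hfin : ∀ x : X, (r ⁻¹' {x}).Finite) (hne : ∀ x : X, (r ⁻¹' {x}).Nonempty)
    {p : ℕ} (hp : 0 < p) (xc : ZMod p → X)
    (hcyc : ∀ i : ZMod p, r (xc (i + 1)) = xc i)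
    (α : ZMod p → ℂ) (hα : ∀ i, ‖α i‖ = 1)
    (hrep : ∀ i : ZMod p, ∃ c δ : ℝ, 0 < c ∧ c < 1 ∧ 0 < δ ∧ ∀ x : X,
      0 < dist x (xc i) → dist x (xc i) < δ → c⁻¹ * dist x (xc i) < dist (r^[p] x) (xc i))
    (hrc : ∀ i : ZMod p, ContinuousAt r (xc i))
    (hcc : ∀ i : ZMod p, ∀ᶠ y in 𝓝 (xc i), Nat.card (r ⁻¹' {y}) = Nat.card (r ⁻¹' {xc i}))
    (m0 : X → ℂ)
    (β : ℝ → ℝ) (hβmono : MonotoneOn β (Set.Ici 0))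
    (hβsum : ∀ A : ℝ, 0 < A → ∀ c : ℝ, 0 < c → c < 1 →
      Summable fun k : ℕ => β (A * c ^ (k + 1)))
    (hβlip : ∀ i : ZMod p, ∀ᶠ y in 𝓝 (xc i), ‖m0 y - m0 (xc i)‖ ≤ β (dist y (xc i)))
    (hlp : ∀ i : ZMod p, m0 (xc i) = α i * (Real.sqrt (Nat.card (r ⁻¹' {r (xc i)})) : ℂ))
    (z : Solenoid r) (i : ZMod p)
    (hz : Tendsto (fun n : ℕ => z.1 ((p : ℤ) * (n : ℤ))) atTop (𝓝 (xc i))) :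
    Multipliable fun k : ℕ => (α (i + ((k + 1 : ℕ) : ZMod p)))⁻¹ * m0 (z.1 ((k : ℤ) + 1)) /
    (Real.sqrt (Nat.card (r ⁻¹' {r (z.1 ((k : ℤ) + 1))})) : ℂ) := by
  have : NeZero p := ⟨hp.ne'⟩
  set a : ℕ → ℂ := fun k : ℕ => (α (i + ((k + 1 : ℕ) : ZMod p)))⁻¹ * m0 (z.1 ((k : ℤ) + 1)) /
    (Real.sqrt (Nat.card (r ⁻¹' {r (z.1 ((k : ℤ) + 1))})) : ℂ) with ha
  suffices hs : Summable fun k => ‖a k - 1‖ by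
    have h := multipliable_one_add_of_summable hs
    simpa using h
  have hres : ∀ s : ℕ, s < p → Summable fun n : ℕ => ‖a (n * p + s) - 1‖ := by
    intro s hs
    let e : ℕ → X := fun n => z.1 (((n * p + s : ℕ) : ℤ) + 1)
    let q : ZMod p := i + ((s + 1 : ℕ) : ZMod p)
    have he : Tendsto e atTop (𝓝 (xc q)) := by
      have h1 := (aux_tail hcyc hrc z i hz (p - 1 - s)).comp (tendsto_add_atTop_nat 1)
      have h2 : i - ((p - 1 - s : ℕ) : ZMod p) = q := by
        have : ((p - 1 - s : ℕ) : ZMod p) + ((s + 1 : ℕ) : ZMod p) = 0 := by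
          rw [← Nat.cast_add]
          have : p - 1 - s + (s + 1) = p := by omega
          rw [this]; simp
        simp only [q]
        linear_combination -this
      rw [h2] at h1
      refine h1.congr fun n => ?_
      simp only [Function.comp_apply, e]
      congr 1
      have : ((p - 1 - s : ℕ) : ℤ) = p - 1 - s := by omega
      rw [this]; push_cast; ring
    have her : ∀ n, r^[p] (e (n + 1)) = e n := by
      intro n
      have := aux_iter z (((n * p + s : ℕ) : ℤ) + 1) p
      simp only [e]
      rw [← this]; congr 2; push_cast; ring
    obtain ⟨c, δ, hc0, hc1, hδ, hcδ⟩ := hrep q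
    have hq1 : r (xc q) = xc (q - 1) := by
      rw [← hcyc (q - 1)]; congr 2; ring
    have ev1 : ∀ᶠ n in atTop, dist (e n) (xc q) < δ := he.eventually (Metric.ball_mem_nhds _ hδ)
    have ev2 := he.eventually (hβlip q)
    have ev3 : ∀ᶠ n in atTop, Nat.card (r ⁻¹' {r (e n)}) = Nat.card (r ⁻¹' {r (xc q)}) := by
      have := (hrc q).tendsto.comp he
      rw [hq1] at this ⊢
      exact this.eventually (hcc (q - 1))
    obtain ⟨N, hN⟩ := eventually_atTop.1 (ev1.and (ev2.and ev3))
    have hstep : ∀ n, N ≤ n → dist (e (n + 1)) (xc q) ≤ c * dist (e n) (xc q) := by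
      intro n hn
      rcases eq_or_lt_of_le (dist_nonneg (x := e (n + 1)) (y := xc q)) with h | h
      · rw [← h]; positivity
      · have h3 := hcδ _ h (hN (n + 1) (by omega)).1
        rw [her] at h3
        rw [inv_mul_lt_iff₀ hc0] at h3
        exact h3.le
    let A : ℝ := (dist (e N) (xc q) + 1) / c
    have hA : 0 < A := by positivity
    have hgeo : ∀ n, dist (e (n + N)) (xc q) ≤ A * c ^ (n + 1) := by
      intro n
      induction n with
      | zero =>
        have : A * c ^ (0 + 1) = dist (e N) (xc q) + 1 := by
          simp only [A, zero_add, pow_one]; field_simp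
        rw [this]; simp
      | succ n ih =>
        have h1 := hstep (n + N) (by omega)
        have e1 : n + 1 + N = n + N + 1 := by ring
        rw [e1]
        calc _ ≤ c * dist (e (n + N)) (xc q) := h1
          _ ≤ c * (A * c ^ (n + 1)) := by gcongr
          _ = _ := by ring
    rw [← summable_nat_add_iff N]
    refine Summable.of_nonneg_of_le (fun _ => norm_nonneg _) (fun n => ?_) (hβsum A hA c hc0 hc1)
    obtain ⟨_, h2, h3⟩ := hN (n + N) (by omega)
    have hidx : i + ((((n + N) * p + s) + 1 : ℕ) : ZMod p) = q := by
      simp [q]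
    have hQ := aux_card hfin hne (r (xc q))
    set Q : ℝ := Real.sqrt (Nat.card (r ⁻¹' {r (xc q)})) with hQdef
    have hQ0 : (Q : ℂ) ≠ 0 := by
      rw [Complex.ofReal_ne_zero]; linarith
    have hα0 : α q ≠ 0 := by
      rw [← norm_ne_zero_iff, hα]; norm_num
    have hak : a ((n + N) * p + s) = (α q)⁻¹ * m0 (e (n + N)) / (Q : ℂ) := by
      simp only [ha]
      rw [hidx]
      have : Nat.card (r ⁻¹' {r (z.1 ((((n + N) * p + s : ℕ) : ℤ) + 1))}) =
        Nat.card (r ⁻¹' {r (xc q)}) := h3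
      rw [this]
    have h1eq : (1 : ℂ) = (α q)⁻¹ * m0 (xc q) / (Q : ℂ) := by
      rw [hlp q, ← hQdef]; field_simp
    have hdiff : a ((n + N) * p + s) - 1 = (α q)⁻¹ * (m0 (e (n + N)) - m0 (xc q)) / (Q : ℂ) := by
      rw [hak, h1eq]; ring
    rw [hdiff, norm_div, norm_mul, norm_inv, hα, Complex.norm_real, Real.norm_of_nonneg (by linarith)]
    calc 1⁻¹ * ‖m0 (e (n + N)) - m0 (xc q)‖ / Q ≤ ‖m0 (e (n + N)) - m0 (xc q)‖ := by
          rw [inv_one, one_mul]; exact div_le_self (norm_nonneg _) hQ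
      _ ≤ β (dist (e (n + N)) (xc q)) := h2
      _ ≤ _ := hβmono (Set.mem_Ici.2 dist_nonneg) (Set.mem_Ici.2 (by positivity)) (hgeo n)
  rw [← (Nat.divModEquiv p).symm.summable_iff, ← (Equiv.prodComm (Fin p) ℕ).summable_iff]
  refine (summable_prod_of_nonneg (fun _ => norm_nonneg _)).2 ⟨fun s => ?_, Summable.of_finite⟩
  exact hres s s.2

lemma aux_scaling {X : Type*} [MetricSpace X]
    {r : X → X} (hfin : ∀ x : X, (r ⁻¹' {x}).Finite) (hne : ∀ x : X, (r ⁻¹' {x}).Nonempty)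
    {p : ℕ} (hp : 0 < p) (xc : ZMod p → X) (hxc : Function.Injective xc)
    (hcyc : ∀ i : ZMod p, r (xc (i + 1)) = xc i)
    (α : ZMod p → ℂ) (hα : ∀ i, ‖α i‖ = 1)
    (ι : Solenoid r → ZMod p)
    (hι : ∀ x : X, ∀ ω ∈ NC r xc x,
      Tendsto (fun n : ℕ => ω.1 ((p : ℤ) * (n : ℤ))) atTop (𝓝 (xc (ι ω))))
    (hrep : ∀ i : ZMod p, ∃ c δ : ℝ, 0 < c ∧ c < 1 ∧ 0 < δ ∧ ∀ x : X,
      0 < dist x (xc i) → dist x (xc i) < δ → c⁻¹ * dist x (xc i) < dist (r^[p] x) (xc i))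
    (hrc : ∀ i : ZMod p, ContinuousAt r (xc i))
    (hcc : ∀ i : ZMod p, ∀ᶠ y in 𝓝 (xc i), Nat.card (r ⁻¹' {y}) = Nat.card (r ⁻¹' {xc i}))
    (m0 : X → ℂ)
    (β : ℝ → ℝ) (hβmono : MonotoneOn β (Set.Ici 0))
    (hβsum : ∀ A : ℝ, 0 < A → ∀ c : ℝ, 0 < c → c < 1 →
      Summable fun k : ℕ => β (A * c ^ (k + 1)))
    (hβlip : ∀ i : ZMod p, ∀ᶠ y in 𝓝 (xc i), ‖m0 y - m0 (xc i)‖ ≤ β (dist y (xc i)))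
    (hlp : ∀ i : ZMod p, m0 (xc i) = α i * (Real.sqrt (Nat.card (r ⁻¹' {r (xc i)})) : ℂ))
    (z : Solenoid r) (x : X) (hz : z ∈ NC r xc x) :
    α (ι z) * (Real.sqrt (Nat.card (r ⁻¹' {r (z.1 0)})) : ℂ) *
      scalingFn r α ι m0 (shiftHat r z) = m0 (z.1 0) * scalingFn r α ι m0 z := by
  have hm := aux_mult hfin hne hp xc hcyc α hα hrep hrc hcc m0 β hβmono hβsum hβlip hlp z (ι z)
    (hι x z hz)
  have hi := aux_iota hxc hcyc hrc ι hι z x hz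
  let b : ℕ → ℂ := fun k => (α (ι (shiftHat r z) + ((k + 1 : ℕ) : ZMod p)))⁻¹ *
    m0 ((shiftHat r z).1 ((k : ℤ) + 1)) /
    (Real.sqrt (Nat.card (r ⁻¹' {r ((shiftHat r z).1 ((k : ℤ) + 1))})) : ℂ)
  have hb : ∀ k, (shiftHat r z).1 ((k : ℤ) + 1) = z.1 k := by
    intro k
    show z.1 ((k : ℤ) + 1 - 1) = z.1 k
    congr 1; ring
  have hb1 : ∀ k : ℕ, b (k + 1) = (α (ι z + ((k + 1 : ℕ) : ZMod p)))⁻¹ * m0 (z.1 ((k : ℤ) + 1)) /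
    (Real.sqrt (Nat.card (r ⁻¹' {r (z.1 ((k : ℤ) + 1))})) : ℂ) := by
    intro k
    simp only [b]
    rw [hb, hi]
    have : ι z - 1 + ((k + 1 + 1 : ℕ) : ZMod p) = ι z + ((k + 1 : ℕ) : ZMod p) := by
      push_cast; ring
    rw [this]; push_cast; rfl
  have hb0 : b 0 = (α (ι z))⁻¹ * m0 (z.1 0) / (Real.sqrt (Nat.card (r ⁻¹' {r (z.1 0)})) : ℂ) := by
    simp only [b]
    rw [hb, hi]
    simp
  have hprod : scalingFn r α ι m0 (shiftHat r z) = b 0 * scalingFn r α ι m0 z := by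
    have h := tprod_eq_zero_mul' (f := b) (by simpa only [hb1] using hm)
    simp only [hb1] at h
    exact h
  have hα0 : α (ι z) ≠ 0 := by
    rw [← norm_ne_zero_iff, hα]; norm_num
  have hQ := aux_card hfin hne (r (z.1 0))
  have hQ0 : (Real.sqrt (Nat.card (r ⁻¹' {r (z.1 0)})) : ℂ) ≠ 0 := by
    rw [Complex.ofReal_ne_zero]; linarith
  rw [hprod, hb0]
  field_simp

lemma aux_pf {X : Type*} [MeasurableSpace X] {r : X → X} (hr : Measurable r)
    (ρ : Measure X) [IsProbabilityMeasure ρ]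
    (hsi : ∀ f : X → ℝ, Measurable f → (∃ M : ℝ, ∀ x, |f x| ≤ M) →
      ∫ x, f x ∂ρ = ∫ x, (Nat.card (r ⁻¹' {x}) : ℝ)⁻¹ * ∑' y : r ⁻¹' {x}, f y.1 ∂ρ)
    (w : X → ℝ) (hw : Measurable w) (hw0 : ∀ x, 0 ≤ w x) (hb : ∃ M : ℝ, ∀ x, |w x| ≤ M)
    (h1 : ∀ x : X, (Nat.card (r ⁻¹' {x}) : ℝ)⁻¹ * ∑' y : r ⁻¹' {x}, w y.1 = 1) :
    (ρ.withDensity (fun x => ENNReal.ofReal (w x))).map r = ρ := by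
  obtain ⟨M, hM⟩ := hb
  ext A hA
  rw [Measure.map_apply hr hA, withDensity_apply _ (hr hA)]
  have hint : Integrable w ρ := Integrable.of_bound hw.aestronglyMeasurable M
    (Eventually.of_forall hM)
  rw [← ofReal_integral_eq_lintegral_ofReal hint.integrableOn
    (Eventually.of_forall hw0), ← integral_indicator (hr hA),
    hsi ((r ⁻¹' A).indicator w) (hw.indicator (hr hA)) ⟨M, fun x => ?_⟩]
  · have : ∀ x, (Nat.card (r ⁻¹' {x}) : ℝ)⁻¹ * ∑' y : r ⁻¹' {x}, (r ⁻¹' A).indicator w y.1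
        = A.indicator (fun _ => (1:ℝ)) x := by
      intro x
      by_cases hx : x ∈ A
      · have : ∀ y : r ⁻¹' {x}, (r ⁻¹' A).indicator w y.1 = w y.1 := by
          rintro ⟨y, hy⟩
          have hy' : r y = x := hy
          exact Set.indicator_of_mem (by rw [Set.mem_preimage, hy']; exact hx) _
        simp only [this, h1, Set.indicator_of_mem hx]
      · have : ∀ y : r ⁻¹' {x}, (r ⁻¹' A).indicator w y.1 = 0 := by
          rintro ⟨y, hy⟩
          have hy' : r y = x := hy
          exact Set.indicator_of_notMem (by rw [Set.mem_preimage, hy']; exact hx) _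
        simp [this, Set.indicator_of_notMem hx]
    simp only [this]
    rw [integral_indicator hA]
    simp
  · by_cases hx : x ∈ r ⁻¹' A
    · rw [Set.indicator_of_mem hx]; exact hM x
    · rw [Set.indicator_of_notMem hx]; simpa using (abs_nonneg _).trans (hM x)

lemma aux_null {X : Type*} [MeasurableSpace X] {r : X → X}
    (hfin : ∀ x : X, (r ⁻¹' {x}).Finite)
    (ρ : Measure X) [IsProbabilityMeasure ρ]
    (hsi : ∀ f : X → ℝ, Measurable f → (∃ M : ℝ, ∀ x, |f x| ≤ M) →
      ∫ x, f x ∂ρ = ∫ x, (Nat.card (r ⁻¹' {x}) : ℝ)⁻¹ * ∑' y : r ⁻¹' {x}, f y.1 ∂ρ)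
    (s N : X → ℝ≥0∞) (hs : Measurable s) (hs1 : ∀ x, s x ≤ 1)
    (hN : ∀ x, ∑' y : r ⁻¹' {x}, s y.1 ≤ N x) (hN0 : ∫⁻ x, N x ∂ρ = 0) :
    ∫⁻ x, s x ∂ρ = 0 := by
  have hst : ∀ x, s x ≠ ⊤ := fun x => ((hs1 x).trans_lt ENNReal.one_lt_top).ne
  have hb : ∀ x, |(s x).toReal| ≤ 1 := fun x => by
    rw [abs_of_nonneg ENNReal.toReal_nonneg]
    exact ENNReal.toReal_le_of_le_ofReal zero_le_one (by simpa using hs1 x)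
  have h := hsi (fun x => (s x).toReal) hs.ennreal_toReal ⟨1, hb⟩
  have hint : Integrable (fun x => (s x).toReal) ρ :=
    Integrable.of_bound hs.ennreal_toReal.aestronglyMeasurable 1 (Eventually.of_forall hb)
  set G : X → ℝ := fun x => (Nat.card (r ⁻¹' {x}) : ℝ)⁻¹ * ∑' y : r ⁻¹' {x}, (s y.1).toReal with hG
  have hG0 : ∀ x, 0 ≤ G x := fun x =>
    mul_nonneg (by positivity) (tsum_nonneg fun _ => ENNReal.toReal_nonneg)
  have hGN : ∀ x, ENNReal.ofReal (G x) ≤ N x := by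
    intro x
    have : Finite (r ⁻¹' {x}) := hfin x
    refine le_trans ?_ (hN x)
    have h1 : G x ≤ ∑' y : r ⁻¹' {x}, (s y.1).toReal := by
      refine mul_le_of_le_one_left (tsum_nonneg fun _ => ENNReal.toReal_nonneg) ?_
      exact Nat.cast_inv_le_one _
    refine (ENNReal.ofReal_le_ofReal h1).trans ?_
    rw [ENNReal.ofReal_tsum_of_nonneg (fun _ => ENNReal.toReal_nonneg) Summable.of_finite]
    exact le_of_eq (tsum_congr fun y => ENNReal.ofReal_toReal (hst _))
  have hz : ∫ x, G x ∂ρ = 0 := by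
    by_cases hi : Integrable G ρ
    · rw [integral_eq_lintegral_of_nonneg_ae (Eventually.of_forall hG0) hi.1]
      have : ∫⁻ x, ENNReal.ofReal (G x) ∂ρ = 0 :=
        le_antisymm ((lintegral_mono hGN).trans hN0.le) zero_le
      rw [this]; rfl
    · exact integral_undef hi
  rw [hz] at h
  have h2 := (ofReal_integral_eq_lintegral_ofReal hint
    (Eventually.of_forall fun _ => ENNReal.toReal_nonneg))
  rw [h] at h2
  simp only [ENNReal.ofReal_toReal (hst _), ENNReal.ofReal_zero] at h2
  exact h2.symm

lemma aux_shift_meas {X : Type*} [MeasurableSpace X] (r : X → X) : Measurable (shiftHat r) := by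
  refine Measurable.subtype_mk ?_
  refine measurable_pi_lambda _ fun n => ?_
  exact (measurable_pi_apply (n - 1)).comp measurable_subtype_coe

lemma aux_coord_meas {X : Type*} [MeasurableSpace X] (r : X → X) (k : ℤ) :
    Measurable (fun z : Solenoid r => z.1 k) :=
  (measurable_pi_apply k).comp measurable_subtype_coe

lemma aux_shift_inj {X : Type*} (r : X → X) : Function.Injective (shiftHat r) := by
  intro a b h
  ext n
  have := congrFun (congrArg Subtype.val h) (n + 1)
  simpa [shiftHat] using this

lemma aux_quasi {X : Type*} [MetricSpace X] [MeasurableSpace X]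
    {r : X → X} (hfin : ∀ x : X, (r ⁻¹' {x}).Finite)
    (ρ : Measure X) [IsProbabilityMeasure ρ]
    (hsi : ∀ f : X → ℝ, Measurable f → (∃ M : ℝ, ∀ x, |f x| ≤ M) →
      ∫ x, f x ∂ρ = ∫ x, (Nat.card (r ⁻¹' {x}) : ℝ)⁻¹ * ∑' y : r ⁻¹' {x}, f y.1 ∂ρ)
    {p : ℕ} (xc : ZMod p → X)
    (hcyc : ∀ i : ZMod p, r (xc (i + 1)) = xc i)
    (lamC : Measure (Solenoid r))
    (hlam : ∀ F : Solenoid r → ℝ≥0∞, Measurable F →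
      ∫⁻ z, F z ∂lamC = ∫⁻ x, ∑' ω : NC r xc x, F ω.1 ∂ρ)
    (hrc : ∀ i : ZMod p, ContinuousAt r (xc i)) :
    Measure.QuasiMeasurePreserving (shiftHat r) lamC lamC := by
  refine ⟨aux_shift_meas r, ?_⟩
  refine Measure.AbsolutelyContinuous.mk fun E hE hE0 => ?_
  rw [Measure.map_apply (aux_shift_meas r) hE]
  have hN := hlam (E.indicator 1) (measurable_one.indicator hE)
  rw [lintegral_indicator_one hE, hE0] at hN
  have hg := hlam ((shiftHat r ⁻¹' E).indicator 1)
    (measurable_one.indicator (aux_shift_meas r hE))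
  rw [lintegral_indicator_one (aux_shift_meas r hE)] at hg
  rw [hg]
  set g : X → ℝ≥0∞ := fun x => ∑' ω : NC r xc x, (shiftHat r ⁻¹' E).indicator 1 ω.1 with hgdef
  obtain ⟨g', hg'm, hg'le, hg'eq⟩ := exists_measurable_le_lintegral_eq ρ g
  rw [hg'eq]
  have hs := aux_null hfin ρ hsi (fun x => min (g' x) 1)
    (fun x => ∑' ω : NC r xc x, E.indicator 1 ω.1)
    (hg'm.min measurable_const) (fun x => min_le_right _ _) (fun x => ?_) hN.symm
  · rw [lintegral_eq_zero_iff (hg'm.min measurable_const)] at hs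
    rw [lintegral_eq_zero_iff hg'm]
    filter_upwards [hs] with x hx
    simpa using hx
  · calc ∑' y : r ⁻¹' {x}, min (g' y.1) 1 ≤ ∑' y : r ⁻¹' {x}, g y.1 :=
        ENNReal.tsum_le_tsum fun y => (min_le_left _ _).trans (hg'le _)
      _ = ∑' q : (Σ y : r ⁻¹' {x}, NC r xc y.1), (shiftHat r ⁻¹' E).indicator 1 q.2.1 :=
        (ENNReal.tsum_sigma (fun (y : r ⁻¹' {x}) (ω : NC r xc y.1) =>
          (shiftHat r ⁻¹' E).indicator (1 : Solenoid r → ℝ≥0∞) ω.1)).symm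
      _ ≤ ∑' ω : NC r xc x, E.indicator 1 ω.1 := by
        let Φ : (Σ y : r ⁻¹' {x}, NC r xc y.1) → NC r xc x := fun q =>
          ⟨shiftHat r q.2.1, by
            have h := aux_shift_mem hcyc hrc q.2.1 q.1.1 q.2.2
            have h2 : r q.1.1 = x := q.1.2
            rw [h2] at h; exact h⟩
        have hΦ : Function.Injective Φ := by
          rintro ⟨⟨y, hy⟩, ⟨ω, hω⟩⟩ ⟨⟨y', hy'⟩, ⟨ω', hω'⟩⟩ h
          have h1 : ω = ω' := aux_shift_inj r (congrArg Subtype.val h)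
          subst h1
          have h2 : y = y' := hω.1.symm.trans hω'.1
          subst h2
          rfl
        exact ENNReal.tsum_comp_le_tsum_of_injective hΦ
          (fun ω : NC r xc x => E.indicator (1 : Solenoid r → ℝ≥0∞) ω.1)

lemma aux_ae_NC {X : Type*} [MetricSpace X] [CompactSpace X] [MeasurableSpace X] [BorelSpace X]
    {r : X → X} (ρ : Measure X)
    {p : ℕ} (hp : 0 < p) (xc : ZMod p → X)
    (lamC : Measure (Solenoid r))
    (hlam : ∀ F : Solenoid r → ℝ≥0∞, Measurable F →
      ∫⁻ z, F z ∂lamC = ∫⁻ x, ∑' ω : NC r xc x, F ω.1 ∂ρ) :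
    ∀ᵐ z ∂lamC, z ∈ NC r xc (z.1 0) := by
  have : NeZero p := ⟨hp.ne'⟩
  have hm : MeasurableSet {z : Solenoid r | z ∈ NC r xc (z.1 0)} := by
    have : {z : Solenoid r | z ∈ NC r xc (z.1 0)} =
        ⋃ i : ZMod p, {z : Solenoid r |
          Tendsto (fun n : ℕ => z.1 ((p : ℤ) * (n : ℤ))) atTop (𝓝 (xc i))} := by
      ext z; simp [NC]
    rw [this]
    refine MeasurableSet.iUnion fun i => ?_
    exact measurableSet_tendsto (𝓝 (xc i)) (fun n => aux_coord_meas r ((p : ℤ) * (n : ℤ)))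
  have h := hlam ({z : Solenoid r | z ∈ NC r xc (z.1 0)}ᶜ.indicator 1)
    (measurable_one.indicator hm.compl)
  rw [lintegral_indicator_one hm.compl] at h
  rw [ae_iff]
  refine h.trans ?_
  have : ∀ x, ∑' ω : NC r xc x,
      ({z : Solenoid r | z ∈ NC r xc (z.1 0)}ᶜ.indicator (1 : Solenoid r → ℝ≥0∞) ω.1) = 0 := by
    intro x
    rw [ENNReal.tsum_eq_zero]
    rintro ⟨ω, hω⟩
    refine Set.indicator_of_notMem ?_ _
    simp only [Set.mem_compl_iff, Set.mem_ofPred_eq, not_not]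
    rw [hω.1]; exact hω
  simp [this]

lemma aux_ac {X : Type*} [MetricSpace X] [MeasurableSpace X]
    {r : X → X} (ρ : Measure X)
    {p : ℕ} (xc : ZMod p → X)
    (lamC : Measure (Solenoid r))
    (hlam : ∀ F : Solenoid r → ℝ≥0∞, Measurable F →
      ∫⁻ z, F z ∂lamC = ∫⁻ x, ∑' ω : NC r xc x, F ω.1 ∂ρ) :
    lamC.map (fun z : Solenoid r => z.1 0) ≪ ρ := by
  refine Measure.AbsolutelyContinuous.mk fun A hA hA0 => ?_
  rw [Measure.map_apply (aux_coord_meas r 0) hA]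
  have hm := aux_coord_meas r 0 hA
  rw [← lintegral_indicator_one hm, hlam _ (measurable_one.indicator hm)]
  have : ∀ᵐ x ∂ρ, ∑' ω : NC r xc x,
      (((fun z : Solenoid r => z.1 0) ⁻¹' A).indicator (1 : Solenoid r → ℝ≥0∞) ω.1) = 0 := by
    have : ∀ᵐ x ∂ρ, x ∉ A := by rw [ae_iff]; simpa using hA0
    filter_upwards [this] with x hx
    rw [ENNReal.tsum_eq_zero]
    rintro ⟨ω, hω⟩
    refine Set.indicator_of_notMem ?_ _
    rw [Set.mem_preimage, hω.1]; exact hx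
  rw [lintegral_congr_ae this]; simp

/-- The measure on `X` attached to a vector of `L²`. -/
def auxNu {X : Type*} [MeasurableSpace X] {r : X → X} {lamC : Measure (Solenoid r)}
    (η : Lp ℂ 2 lamC) : Measure X :=
  (lamC.withDensity (fun z => ‖η z‖ₑ ^ 2)).map (fun z => z.1 0)

lemma aux_sq {Z : Type*} [MeasurableSpace Z] {μ : Measure Z} (η : Lp ℂ 2 μ) :
    ∫⁻ z, ‖η z‖ₑ ^ 2 ∂μ = ‖η‖ₑ ^ 2 := by
  rw [Lp.enorm_def]
  have h := eLpNorm_nnreal_pow_eq_lintegral (f := η) (μ := μ) (p := 2) (by norm_num)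
  simpa using h.symm

lemma aux_em {Z : Type*} [MeasurableSpace Z] {μ : Measure Z} (η : Lp ℂ 2 μ) :
    Measurable (fun z => ‖η z‖ₑ ^ 2) :=
  (Lp.stronglyMeasurable η).measurable.enorm.pow_const 2

lemma aux_nu_apply {X : Type*} [MeasurableSpace X] {r : X → X} {lamC : Measure (Solenoid r)}
    (η : Lp ℂ 2 lamC) (A : Set X) (hA : MeasurableSet A) :
    auxNu η A = ∫⁻ z in (fun z : Solenoid r => z.1 0) ⁻¹' A, ‖η z‖ₑ ^ 2 ∂lamC := by
  rw [auxNu, Measure.map_apply (aux_coord_meas r 0) hA,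
    withDensity_apply _ (aux_coord_meas r 0 hA)]

lemma aux_nu_univ {X : Type*} [MeasurableSpace X] {r : X → X} {lamC : Measure (Solenoid r)}
    (η : Lp ℂ 2 lamC) : auxNu η Set.univ = ‖η‖ₑ ^ 2 := by
  rw [aux_nu_apply η _ MeasurableSet.univ, Set.preimage_univ, Measure.restrict_univ, aux_sq]

lemma aux_nu_fin {X : Type*} [MeasurableSpace X] {r : X → X} {lamC : Measure (Solenoid r)}
    (η : Lp ℂ 2 lamC) : IsFiniteMeasure (auxNu η) := by
  refine ⟨?_⟩
  rw [aux_nu_univ]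
  exact ENNReal.pow_lt_top enorm_lt_top

lemma aux_nu_ac {X : Type*} [MeasurableSpace X] {r : X → X} {lamC : Measure (Solenoid r)}
    {ρ : Measure X} (h : lamC.map (fun z : Solenoid r => z.1 0) ≪ ρ)
    (η : Lp ℂ 2 lamC) : auxNu η ≪ ρ :=
  ((withDensity_absolutelyContinuous lamC _).map (aux_coord_meas r 0)).trans h

lemma aux_nu_wd {X : Type*} [MeasurableSpace X] {r : X → X} {lamC : Measure (Solenoid r)}
    (η ψ : Lp ℂ 2 lamC) (g : X → ℂ) (hg : Measurable g)
    (h : ⇑η =ᵐ[lamC] fun z => g (z.1 0) * ψ z) :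
    auxNu η = (auxNu ψ).withDensity (fun x => ‖g x‖ₑ ^ 2) := by
  ext A hA
  have hgm : Measurable (fun x => ‖g x‖ₑ ^ 2) := hg.enorm.pow_const 2
  rw [withDensity_apply _ hA, aux_nu_apply η A hA, auxNu,
    setLIntegral_map hA hgm (aux_coord_meas r 0),
    setLIntegral_withDensity_eq_setLIntegral_mul lamC (aux_em ψ)
      (g := fun z : Solenoid r => ‖g (z.1 0)‖ₑ ^ 2) (hgm.comp (aux_coord_meas r 0)) (aux_coord_meas r 0 hA)]
  refine lintegral_congr_ae (ae_restrict_of_ae ?_)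
  filter_upwards [h] with z hz
  rw [hz, enorm_mul, mul_pow]
  simp [mul_comm]

lemma aux_nu_map {X : Type*} [MeasurableSpace X] {r : X → X} (hr : Measurable r)
    {lamC : Measure (Solenoid r)} (w : Solenoid r → ℂ)
    (hqi : Measure.QuasiMeasurePreserving (shiftHat r) lamC lamC)
    (U : Lp ℂ 2 lamC ≃ₗᵢ[ℂ] Lp ℂ 2 lamC)
    (hU : ∀ ξ : Lp ℂ 2 lamC, ⇑(U ξ) =ᵐ[lamC] fun z => w z * ξ (shiftHat r z))
    (π : (X → ℂ) → (Lp ℂ 2 lamC →L[ℂ] Lp ℂ 2 lamC))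
    (hπ : ∀ f : X → ℂ, Measurable f → (∃ M : ℝ, ∀ x, ‖f x‖ ≤ M) →
      ∀ ξ : Lp ℂ 2 lamC, ⇑(π f ξ) =ᵐ[lamC] fun z => f (z.1 0) * ξ z)
    (η : Lp ℂ 2 lamC) : (auxNu (U η)).map r = auxNu η := by
  ext A hA
  rw [Measure.map_apply hr hA, aux_nu_apply _ _ (hr hA), aux_nu_apply _ _ hA]
  let f : X → ℂ := A.indicator 1
  have hf : Measurable f := measurable_one.indicator hA
  have hfb : ∃ M : ℝ, ∀ x, ‖f x‖ ≤ M := ⟨1, fun x => by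
    by_cases hx : x ∈ A <;> simp [f, hx]⟩
  have h1 := hπ f hf hfb η
  have h2 := hU (π f η)
  have h3 := hqi.ae h1
  have e1 : ∫⁻ z in (fun z : Solenoid r => z.1 0) ⁻¹' A, ‖η z‖ₑ ^ 2 ∂lamC
      = ∫⁻ z, ‖π f η z‖ₑ ^ 2 ∂lamC := by
    rw [← lintegral_indicator (aux_coord_meas r 0 hA)]
    refine lintegral_congr_ae ?_
    filter_upwards [h1] with z hz
    rw [hz]
    by_cases hx : z.1 0 ∈ A <;> simp [f, hx]
  have e2 : ∫⁻ z in (fun z : Solenoid r => z.1 0) ⁻¹' (r ⁻¹' A), ‖U η z‖ₑ ^ 2 ∂lamC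
      = ∫⁻ z, ‖U (π f η) z‖ₑ ^ 2 ∂lamC := by
    rw [← lintegral_indicator (aux_coord_meas r 0 (hr hA))]
    refine lintegral_congr_ae ?_
    filter_upwards [h2, h3, hU η] with z hz hz3 hzU
    rw [hz, hz3]
    have hs : (shiftHat r z).1 0 = r (z.1 0) := by
      have := z.2 (-1)
      simpa [shiftHat] using this.symm
    rw [hs]
    by_cases hx : r (z.1 0) ∈ A <;> simp [f, hx, hzU]
  rw [e1, e2, aux_sq, aux_sq, ← ofReal_norm, ← ofReal_norm, U.norm_map]

lemma aux_closure {X : Type*} [MeasurableSpace X] {r : X → X}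
    {lamC : Measure (Solenoid r)}
    (π : (X → ℂ) → (Lp ℂ 2 lamC →L[ℂ] Lp ℂ 2 lamC))
    (hπ : ∀ f : X → ℂ, Measurable f → (∃ M : ℝ, ∀ x, ‖f x‖ ≤ M) →
      ∀ ξ : Lp ℂ 2 lamC, ⇑(π f ξ) =ᵐ[lamC] fun z => f (z.1 0) * ξ z)
    (φ ξ : Lp ℂ 2 lamC)
    (hξ : ξ ∈ closure {ξ : Lp ℂ 2 lamC |
        ∃ f : X → ℂ, Measurable f ∧ (∃ M : ℝ, ∀ x, ‖f x‖ ≤ M) ∧ ξ = π f φ}) :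
    ∃ f : X → ℂ, Measurable f ∧ ⇑ξ =ᵐ[lamC] fun z => f (z.1 0) * φ z := by
  obtain ⟨ζ, hζ, hlim⟩ := mem_closure_iff_seq_limit.1 hξ
  choose f hfm hfb hfe using hζ
  obtain ⟨ns, -, hns⟩ := (tendstoInMeasure_of_tendsto_Lp hlim).exists_seq_tendsto_ae
  have hae : ∀ᵐ z ∂lamC, ∀ n, ζ n z = f n (z.1 0) * φ z := by
    rw [ae_all_iff]
    intro n
    have := hπ (f n) (hfm n) (hfb n) φ
    rw [← hfe n] at this
    exact this
  refine ⟨fun x => limUnder atTop (fun k => f (ns k) x), ?_, ?_⟩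
  · exact (StronglyMeasurable.limUnder (fun k => (hfm (ns k)).stronglyMeasurable)).measurable
  · filter_upwards [hns, hae] with z h1 h2
    simp only [h2] at h1
    by_cases h0 : φ z = 0
    · simp only [h0, mul_zero] at h1 ⊢
      exact tendsto_nhds_unique h1 tendsto_const_nhds
    · have h3 : Tendsto (fun k => f (ns k) (z.1 0)) atTop (𝓝 (ξ z / φ z)) := by
        have := h1.div_const (φ z)
        simpa [h0] using this
      rw [h3.limUnder_eq]
      field_simp

theorem statement12
    {X : Type*} [MetricSpace X] [CompactSpace X] [MeasurableSpace X] [BorelSpace X]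
    (r : X → X) (hr : Measurable r)
    (hfin : ∀ x : X, (r ⁻¹' {x}).Finite) (hne : ∀ x : X, (r ⁻¹' {x}).Nonempty)
    (ρ : Measure X) [IsProbabilityMeasure ρ]
    (hsi : ∀ f : X → ℝ, Measurable f → (∃ M : ℝ, ∀ x, |f x| ≤ M) →
      ∫ x, f x ∂ρ = ∫ x, (Nat.card (r ⁻¹' {x}) : ℝ)⁻¹ * ∑' y : r ⁻¹' {x}, f y.1 ∂ρ)
    {p : ℕ} (hp : 0 < p) (xc : ZMod p → X) (hxc : Function.Injective xc)
    (hcyc : ∀ i : ZMod p, r (xc (i + 1)) = xc i)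
    (lamC : Measure (Solenoid r))
    (hlam : ∀ F : Solenoid r → ℝ≥0∞, Measurable F →
      ∫⁻ z, F z ∂lamC = ∫⁻ x, ∑' ω : NC r xc x, F ω.1 ∂ρ)
    (α : ZMod p → ℂ) (hα : ∀ i, ‖α i‖ = 1)
    (ι : Solenoid r → ZMod p)
    (hι : ∀ x : X, ∀ ω ∈ NC r xc x,
      Tendsto (fun n : ℕ => ω.1 ((p : ℤ) * (n : ℤ))) atTop (𝓝 (xc (ι ω))))
    (hrep : ∀ i : ZMod p, ∃ c δ : ℝ, 0 < c ∧ c < 1 ∧ 0 < δ ∧ ∀ x : X,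
      0 < dist x (xc i) → dist x (xc i) < δ → c⁻¹ * dist x (xc i) < dist (r^[p] x) (xc i))
    (hrc : ∀ i : ZMod p, ContinuousAt r (xc i))
    (hcc : ∀ i : ZMod p, ∀ᶠ y in 𝓝 (xc i), Nat.card (r ⁻¹' {y}) = Nat.card (r ⁻¹' {xc i}))
    (m0 : X → ℂ) (hm0m : Measurable m0) (hm0b : ∃ M : ℝ, ∀ x, ‖m0 x‖ ≤ M)
    (β : ℝ → ℝ) (hβmono : MonotoneOn β (Set.Ici 0)) (hβ0 : ∀ t : ℝ, 0 ≤ t → 0 ≤ β t)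
    (hβsum : ∀ A : ℝ, 0 < A → ∀ c : ℝ, 0 < c → c < 1 →
      Summable fun k : ℕ => β (A * c ^ (k + 1)))
    (hβlip : ∀ i : ZMod p, ∀ᶠ y in 𝓝 (xc i), ‖m0 y - m0 (xc i)‖ ≤ β (dist y (xc i)))
    (hqmf : ∀ x : X,
      (Nat.card (r ⁻¹' {x}) : ℝ)⁻¹ * ∑' y : r ⁻¹' {x}, ‖m0 y.1‖ ^ 2 = 1)
    (hlp : ∀ i : ZMod p, m0 (xc i) = α i * (Real.sqrt (Nat.card (r ⁻¹' {r (xc i)})) : ℂ))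
    (U : Lp ℂ 2 lamC ≃ₗᵢ[ℂ] Lp ℂ 2 lamC)
    (hU : ∀ ξ : Lp ℂ 2 lamC, ⇑(U ξ) =ᵐ[lamC]
      fun z => α (ι z) * (Real.sqrt (Nat.card (r ⁻¹' {r (z.1 0)})) : ℂ) * ξ (shiftHat r z))
    (π : (X → ℂ) → (Lp ℂ 2 lamC →L[ℂ] Lp ℂ 2 lamC))
    (hπ : ∀ f : X → ℂ, Measurable f → (∃ M : ℝ, ∀ x, ‖f x‖ ≤ M) →
      ∀ ξ : Lp ℂ 2 lamC, ⇑(π f ξ) =ᵐ[lamC] fun z => f (z.1 0) * ξ z)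
    (Upow : ℤ → (Lp ℂ 2 lamC ≃ₗᵢ[ℂ] Lp ℂ 2 lamC))
    (hUpow0 : Upow 0 = LinearIsometryEquiv.refl ℂ (Lp ℂ 2 lamC))
    (hUpowS : ∀ (k : ℤ) (ξ : Lp ℂ 2 lamC), Upow (k + 1) ξ = U (Upow k ξ))
    (φ : Lp ℂ 2 lamC) (hφ : ⇑φ =ᵐ[lamC] scalingFn r α ι m0)
    (hav : Averaging r ρ) (hnot1 : ρ {x : X | ‖m0 x‖ ≠ 1} ≠ 0) :
    ∀ V0 : Set (Lp ℂ 2 lamC),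
      V0 = closure {ξ : Lp ℂ 2 lamC |
        ∃ f : X → ℂ, Measurable f ∧ (∃ M : ℝ, ∀ x, ‖f x‖ ≤ M) ∧ ξ = π f φ} →
      ⋂ n : ℤ, (fun ξ => Upow (-n) ξ) '' V0 = {0} := by
  intro V0 hV0
  have hqi := aux_quasi hfin ρ hsi xc hcyc lamC hlam hrc
  have hac := aux_ac ρ xc lamC hlam
  have hNC := aux_ae_NC ρ hp xc lamC hlam
  have hcardinv : ∀ x : X, (Nat.card (r ⁻¹' {x}) : ℝ)⁻¹ * ∑' _ : r ⁻¹' {x}, (1 : ℝ) = 1 := by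
    intro x
    have : Finite (r ⁻¹' {x}) := hfin x
    have : Nonempty (r ⁻¹' {x}) := (hne x).to_subtype
    have : Fintype (r ⁻¹' {x}) := Fintype.ofFinite _
    have h0 : (Nat.card (r ⁻¹' {x}) : ℝ) ≠ 0 := Nat.cast_ne_zero.2 Nat.card_pos.ne'
    rw [tsum_fintype, Finset.sum_const, Finset.card_univ, ← Nat.card_eq_fintype_card]
    rw [nsmul_eq_mul, mul_one]
    exact inv_mul_cancel₀ h0
  have hmp : MeasurePreserving r ρ ρ := by
    refine ⟨hr, ?_⟩
    have h := aux_pf hr ρ hsi (fun _ => 1) measurable_const (fun _ => zero_le_one)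
      ⟨1, fun _ => by simp⟩ hcardinv
    have h1 : ρ.withDensity (fun _ => ENNReal.ofReal 1) = ρ := by
      rw [ENNReal.ofReal_one]; exact withDensity_one
    rwa [h1] at h
  obtain ⟨M, hM⟩ := hm0b
  have hum : Measurable (fun x => ‖m0 x‖ ^ 2) := hm0m.norm.pow_const 2
  have hq := aux_pf hr ρ hsi (fun x => ‖m0 x‖ ^ 2) hum (fun _ => by positivity)
    ⟨M ^ 2, fun x => by
      rw [abs_of_nonneg (by positivity)]
      exact pow_le_pow_left₀ (norm_nonneg _) (hM x) 2⟩ hqmf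
  -- action of `U` on functions `f(z₀) φ(z)`
  have hUf : ∀ (η : Lp ℂ 2 lamC) (f : X → ℂ), (⇑η =ᵐ[lamC] fun z => f (z.1 0) * φ z) →
      ⇑(U η) =ᵐ[lamC] fun z => (f (r (z.1 0)) * m0 (z.1 0)) * φ z := by
    intro η f hη
    filter_upwards [hU η, hqi.ae hη, hφ, hqi.ae hφ, hNC] with z h1 h2 h3 h4 h5
    have hs : (shiftHat r z).1 0 = r (z.1 0) := by
      have := z.2 (-1)
      simpa [shiftHat] using this.symm
    have hsc := aux_scaling hfin hne hp xc hxc hcyc α hα ι hι hrep hrc hcc m0 β hβmono hβsum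
      hβlip hlp z _ h5
    rw [h1, h2, h4, h3, hs, mul_assoc (f (r (z.1 0))), ← hsc]
    ring
  have hUn : ∀ (n : ℕ) (ζ : Lp ℂ 2 lamC), Upow n (U ζ) = U (Upow n ζ) := by
    intro n
    induction n with
    | zero => intro ζ; simp [hUpow0]
    | succ n ih =>
      intro ζ
      push_cast
      rw [hUpowS, hUpowS, ih]
  refine Set.eq_singleton_iff_unique_mem.2 ⟨?_, ?_⟩
  · refine Set.mem_iInter.2 fun n => ⟨0, ?_, by simp⟩
    rw [hV0]
    refine subset_closure ⟨fun _ => 0, measurable_const, ⟨0, by simp⟩, ?_⟩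
    have h := hπ (fun _ => 0) measurable_const ⟨0, by simp⟩ φ
    symm
    rw [Lp.eq_zero_iff_ae_eq_zero]
    filter_upwards [h] with z hz
    simp [hz]
  · intro ξ hξ
    have hex : ∀ n : ℕ, ∃ ζ ∈ V0, Upow n ζ = ξ := by
      intro n
      obtain ⟨ζ, h1, h2⟩ := Set.mem_iInter.1 hξ (-(n : ℤ))
      refine ⟨ζ, h1, ?_⟩
      simpa using h2
    choose ζ hζV hζ using hex
    have hζ0 : ζ 0 = ξ := by
      have := hζ 0
      simpa [hUpow0] using this
    have hζS : ∀ n, U (ζ (n + 1)) = ζ n := by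
      intro n
      apply (Upow n).injective
      have h1 := hζ (n + 1)
      push_cast at h1
      rw [hUpowS] at h1
      rw [hUn, h1, hζ]
    have hcl : ∀ n, ∃ f : X → ℂ, Measurable f ∧ ⇑(ζ n) =ᵐ[lamC] fun z => f (z.1 0) * φ z :=
      fun n => aux_closure π hπ φ (ζ n) (hV0 ▸ hζV n)
    choose f hfm hfe using hcl
    by_contra hξ0
    have : IsFiniteMeasure (auxNu φ) := aux_nu_fin φ
    have : ∀ n, IsFiniteMeasure (auxNu (ζ n)) := fun n => aux_nu_fin (ζ n)
    have hfinal := aux_final ρ hmp hav (fun x => ‖m0 x‖ ^ 2) hum (fun _ => by positivity) hq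
      (auxNu φ) (aux_nu_ac hac φ) (fun n => auxNu (ζ n)) (fun n => aux_nu_ac hac (ζ n))
      (fun n x => ‖f n x‖ₑ ^ 2) (fun n => (hfm n).enorm.pow_const 2)
      (fun n => aux_nu_wd (ζ n) φ (f n) (hfm n) (hfe n))
      (fun n => by
        have h1 := hUf (ζ (n + 1)) (f (n + 1)) (hfe (n + 1))
        rw [hζS] at h1
        rw [aux_nu_wd (ζ n) φ (fun x => f (n + 1) (r x) * m0 x)
          (((hfm (n + 1)).comp hr).mul hm0m) h1]
        congr 1
        funext x
        rw [enorm_mul, mul_pow, ENNReal.ofReal_pow (norm_nonneg _), ofReal_norm])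
      (fun n => by
        have h1 := aux_nu_map hr _ hqi U hU π hπ (ζ (n + 1))
        rw [hζS] at h1
        exact h1)
      (by
        rw [aux_nu_univ, hζ0]
        exact pow_ne_zero 2 (enorm_ne_zero.2 hξ0))
    apply hnot1
    have h1 : ∀ᵐ x ∂ρ, ‖m0 x‖ = 1 := by
      filter_upwards [hfinal] with x hx
      exact (pow_eq_one_iff_of_nonneg (norm_nonneg _) two_ne_zero).1 hx
    exact h1
end
end

section
/- Under the hypotheses of the scaling-function theorem (C repelling; r and #r⁻¹ continuous at the points of C; m_0 β-Lipschitz at the points of C satisfying the quadrature and low-pass conditions), let h_C(x) = Σ_{ω∈N_C(x)} |φ̂(x,ω)|² and V_0 = closure in L²(X_∞, λ_C) of {π(f)φ̂ : f ∈ L^∞(X, ρ)}. Then the map 𝒥 defined on L^∞(X, ρ) by 𝒥(f) = π(f)φ̂ extends to an isometric isomorphism 𝒥 : L²(X, h_C dρ) → V_0, and it intertwines the operators: U 𝒥 = 𝒥 S_0, where S_0 f = m_0 · (f ∘ r) on L²(X, h_C dρ). -/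
open MeasureTheory Filter Topology ENNReal

noncomputable section

lemma card_fib_pos {X : Type*} {r : X → X} (hfin : ∀ x : X, (r ⁻¹' {x}).Finite) (hne : ∀ x : X, (r ⁻¹' {x}).Nonempty)
    (x : X) : (1:ℝ) ≤ Nat.card (r ⁻¹' {x}) := by
  have := (hfin x).to_subtype
  have := (hne x).to_subtype
  exact_mod_cast Nat.card_pos (α := r ⁻¹' {x})

section SI
set_option linter.unusedSectionVars false
variable {X : Type*} [MeasurableSpace X] {r : X → X} {ρ : Measure X} [IsProbabilityMeasure ρ]

/-- The averaged count of preimages in `B`. -/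
def avgB (r : X → X) (B : Set X) (x : X) : ℝ :=
  (Nat.card (r ⁻¹' {x}) : ℝ)⁻¹ * ∑' y : r ⁻¹' {x}, B.indicator (fun _ => (1:ℝ)) y.1

lemma avgB_nonneg (B : Set X) (x : X) : 0 ≤ avgB r B x := by
  unfold avgB
  refine mul_nonneg (by positivity) (tsum_nonneg fun y => Set.indicator_nonneg (by simp) _)

lemma avgB_ne_zero_iff (hfin : ∀ x : X, (r ⁻¹' {x}).Finite)
    (hne : ∀ x : X, (r ⁻¹' {x}).Nonempty) (B : Set X) (x : X) :
    avgB r B x ≠ 0 ↔ x ∈ r '' B := by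
  have hc := card_fib_pos hfin hne x
  have := (hfin x).to_subtype
  have hs : Summable fun y : r ⁻¹' {x} => B.indicator (fun _ => (1:ℝ)) y.1 := by
    let _ := Fintype.ofFinite (r ⁻¹' {x})
    exact (hasSum_fintype _).summable
  constructor
  · intro h
    by_contra hx
    apply h
    unfold avgB
    have : ∀ y : r ⁻¹' {x}, B.indicator (fun _ => (1:ℝ)) y.1 = 0 := by
      intro y
      rw [Set.indicator_of_notMem]
      intro hy
      exact hx ⟨y.1, hy, y.2⟩
    simp [this]
  · rintro ⟨y, hy, hyx⟩
    unfold avgB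
    have h1 : B.indicator (fun _ => (1:ℝ)) y ≤
        ∑' y : r ⁻¹' {x}, B.indicator (fun _ => (1:ℝ)) y.1 :=
      hs.le_tsum (⟨y, hyx⟩ : r ⁻¹' {x}) (fun j _ => Set.indicator_nonneg (by simp) _)
    rw [Set.indicator_of_mem hy] at h1
    have : 0 < (Nat.card (r ⁻¹' {x}) : ℝ)⁻¹ := by positivity
    positivity

lemma avgB_integrable (hfin : ∀ x : X, (r ⁻¹' {x}).Finite)
    (hne : ∀ x : X, (r ⁻¹' {x}).Nonempty)
    (hsi : ∀ f : X → ℝ, Measurable f → (∃ M : ℝ, ∀ x, |f x| ≤ M) →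
      ∫ x, f x ∂ρ = ∫ x, (Nat.card (r ⁻¹' {x}) : ℝ)⁻¹ * ∑' y : r ⁻¹' {x}, f y.1 ∂ρ)
    {B : Set X} (hB : MeasurableSet B) :
    Integrable (avgB r B) ρ ∧ ∫ x, avgB r B x ∂ρ = ρ.real B := by
  have hb : ∀ x, |B.indicator (fun _ => (1:ℝ)) x| ≤ 1 := by
    intro x
    by_cases h : x ∈ B <;> simp [h]
  have hm : Measurable (B.indicator (fun _ => (1:ℝ))) := measurable_const.indicator hB
  have hi : Integrable (B.indicator (fun _ => (1:ℝ))) ρ := (integrable_const 1).indicator hB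
  have h2 := hsi (B.indicator (fun _ => (1:ℝ))) hm ⟨1, hb⟩
  have h1 := hsi (fun x => 1 + B.indicator (fun _ => (1:ℝ)) x) (measurable_const.add hm)
    ⟨2, fun x => (abs_add_le _ _).trans (by simp only [abs_one]; linarith [hb x])⟩
  have e : (fun x => (Nat.card (r ⁻¹' {x}) : ℝ)⁻¹ *
      ∑' y : r ⁻¹' {x}, (1 + B.indicator (fun _ => (1:ℝ)) y.1)) = fun x => 1 + avgB r B x := by
    ext x
    have hc := card_fib_pos hfin hne x
    have := (hfin x).to_subtype
    let _ := Fintype.ofFinite (r ⁻¹' {x})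
    rw [avgB, tsum_fintype, tsum_fintype, Finset.sum_add_distrib, mul_add]
    congr 1
    simp only [Finset.sum_const, Finset.card_univ, nsmul_eq_mul, mul_one]
    rw [← Nat.card_eq_fintype_card]
    field_simp
  rw [e, integral_add (integrable_const _) hi, integral_indicator_const _ hB] at h1
  have hI : Integrable (fun x => 1 + avgB r B x) ρ := by
    by_contra hcon
    rw [integral_undef hcon] at h1
    simp at h1
    have : 0 ≤ ρ.real B := measureReal_nonneg
    linarith
  refine ⟨?_, ?_⟩
  · have := hI.sub (integrable_const (1:ℝ))
    refine this.congr (ae_of_all _ fun x => ?_)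
    simp
  · rw [integral_indicator_const _ hB, smul_eq_mul, mul_one] at h2
    exact h2.symm

lemma image_null (hfin : ∀ x : X, (r ⁻¹' {x}).Finite)
    (hne : ∀ x : X, (r ⁻¹' {x}).Nonempty)
    (hsi : ∀ f : X → ℝ, Measurable f → (∃ M : ℝ, ∀ x, |f x| ≤ M) →
      ∫ x, f x ∂ρ = ∫ x, (Nat.card (r ⁻¹' {x}) : ℝ)⁻¹ * ∑' y : r ⁻¹' {x}, f y.1 ∂ρ)
    {B : Set X} (hB : ρ B = 0) : ρ (r '' B) = 0 := by
  obtain ⟨B', hBB, hB', h0⟩ := exists_measurable_superset_of_null hB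
  refine measure_mono_null (Set.image_mono hBB) ?_
  obtain ⟨hI, he⟩ := avgB_integrable hfin hne hsi hB'
  have : ρ.real B' = 0 := by simp [Measure.real, h0]
  rw [this, integral_eq_zero_iff_of_nonneg (avgB_nonneg B') hI] at he
  have : ∀ᵐ x ∂ρ, x ∉ r '' B' := by
    filter_upwards [he] with x hx
    rw [← avgB_ne_zero_iff hfin hne]
    simpa using hx
  rw [ae_iff] at this
  simp only [not_not] at this
  exact this

lemma image_nullMeas (hfin : ∀ x : X, (r ⁻¹' {x}).Finite)
    (hne : ∀ x : X, (r ⁻¹' {x}).Nonempty)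
    (hsi : ∀ f : X → ℝ, Measurable f → (∃ M : ℝ, ∀ x, |f x| ≤ M) →
      ∫ x, f x ∂ρ = ∫ x, (Nat.card (r ⁻¹' {x}) : ℝ)⁻¹ * ∑' y : r ⁻¹' {x}, f y.1 ∂ρ)
    {B : Set X} (hB : NullMeasurableSet B ρ) : NullMeasurableSet (r '' B) ρ := by
  obtain ⟨B', hBB, hB', h0⟩ := hB.exists_measurable_subset_ae_eq
  have e : B = B' ∪ (B \ B') := (Set.union_sdiff_cancel hBB).symm
  rw [e, Set.image_union]
  refine NullMeasurableSet.union ?_ (NullMeasurableSet.of_null (image_null hfin hne hsi ?_))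
  · have hm := (avgB_integrable hfin hne hsi hB').1.aestronglyMeasurable.aemeasurable
    have := hm.nullMeasurable (measurableSet_singleton (0:ℝ)).compl
    convert this using 1
    ext x
    rw [← avgB_ne_zero_iff hfin hne]
    simp
  · exact (ae_le_set.1 h0.symm.le)

lemma iter_image_nullMeas (hfin : ∀ x : X, (r ⁻¹' {x}).Finite)
    (hne : ∀ x : X, (r ⁻¹' {x}).Nonempty)
    (hsi : ∀ f : X → ℝ, Measurable f → (∃ M : ℝ, ∀ x, |f x| ≤ M) →
      ∫ x, f x ∂ρ = ∫ x, (Nat.card (r ⁻¹' {x}) : ℝ)⁻¹ * ∑' y : r ⁻¹' {x}, f y.1 ∂ρ)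
    (n : ℕ) : ∀ {B : Set X}, NullMeasurableSet B ρ → NullMeasurableSet (r^[n] '' B) ρ := by
  induction n with
  | zero => intro B hB; simpa using hB
  | succ n ih =>
    intro B hB
    rw [Function.iterate_succ, Set.image_comp]
    exact ih (image_nullMeas hfin hne hsi hB)

lemma preimage_null (hr : Measurable r) (hfin : ∀ x : X, (r ⁻¹' {x}).Finite)
    (hne : ∀ x : X, (r ⁻¹' {x}).Nonempty)
    (hsi : ∀ f : X → ℝ, Measurable f → (∃ M : ℝ, ∀ x, |f x| ≤ M) →
      ∫ x, f x ∂ρ = ∫ x, (Nat.card (r ⁻¹' {x}) : ℝ)⁻¹ * ∑' y : r ⁻¹' {x}, f y.1 ∂ρ)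
    {B : Set X} (hB : ρ B = 0) : ρ (r ⁻¹' B) = 0 := by
  obtain ⟨B', hBB, hB', h0⟩ := exists_measurable_superset_of_null hB
  refine measure_mono_null (Set.preimage_mono hBB) ?_
  obtain ⟨hI, he⟩ := avgB_integrable hfin hne hsi (hr hB')
  have h : avgB r (r ⁻¹' B') =ᵐ[ρ] 0 := by
    have : ∀ᵐ x ∂ρ, x ∉ B' := by simpa [ae_iff] using h0
    filter_upwards [this] with x hx
    by_contra hcon
    obtain ⟨y, hy, hyx⟩ := (avgB_ne_zero_iff hfin hne _ _).1 hcon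
    exact hx (hyx ▸ hy)
  rw [integral_congr_ae h] at he
  simp at he
  exact (measureReal_eq_zero_iff).1 he.symm
end SI
section Dyn
set_option linter.unusedSectionVars false

lemma sol_iter {X : Type*} {r : X → X} (z : Solenoid r) (k : ℕ) :
    ∀ n : ℤ, r^[k] (z.1 (n + k)) = z.1 n := by
  induction k with
  | zero => intro n; simp
  | succ k ih =>
    intro n
    rw [Function.iterate_succ_apply]
    have := z.2 (n + k)
    rw [show n + ((k+1 : ℕ) : ℤ) = n + k + 1 by push_cast; ring, this, ih]

lemma evt_of_residues {p : ℕ} (hp : 0 < p) {P : ℕ → Prop}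
    (h : ∀ j : ℕ, ∀ᶠ n : ℕ in atTop, P (p * n + j)) : ∀ᶠ k in atTop, P k := by
  have h' : ∀ᶠ n : ℕ in atTop, ∀ j ∈ Finset.range p, P (p * n + j) := by
    rw [Filter.eventually_all_finset]
    exact fun j _ => h j
  obtain ⟨N, hN⟩ := eventually_atTop.1 h'
  refine eventually_atTop.2 ⟨p * N, fun k hk => ?_⟩
  have := hN (k / p) ((Nat.le_div_iff_mul_le hp).2 (by rwa [mul_comm])) (k % p)
    (Finset.mem_range.2 (Nat.mod_lt _ hp))
  rwa [Nat.div_add_mod] at this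

variable {X : Type*} [MetricSpace X] {r : X → X} {p : ℕ} {xc : ZMod p → X}

lemma cyc_pred (hcyc : ∀ i : ZMod p, r (xc (i + 1)) = xc i) (i : ZMod p) :
    r (xc i) = xc (i - 1) := by
  have := hcyc (i - 1)
  rwa [sub_add_cancel] at this

lemma tendsto_sub (hcyc : ∀ i : ZMod p, r (xc (i + 1)) = xc i)
    (hrc : ∀ i : ZMod p, ContinuousAt r (xc i)) (z : Solenoid r) (i : ZMod p)
    (h : Tendsto (fun n : ℕ => z.1 ((p : ℤ) * (n : ℤ))) atTop (𝓝 (xc i))) (j : ℕ) :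
    Tendsto (fun n : ℕ => z.1 ((p : ℤ) * (n : ℤ) - j)) atTop (𝓝 (xc (i - j))) := by
  induction j with
  | zero => simpa using h
  | succ j ih =>
    have := (hrc (i - j)).tendsto.comp ih
    rw [cyc_pred hcyc] at this
    convert this using 2
    · rename_i n
      simp only [Function.comp]
      have h2 := z.2 (p * n - ((j + 1 : ℕ) : ℤ))
      rw [← h2]
      congr 2
      push_cast; ring
    · push_cast; congr 1; ring

lemma sol_tendsto_add (hp : 0 < p) (hcyc : ∀ i : ZMod p, r (xc (i + 1)) = xc i)
    (hrc : ∀ i : ZMod p, ContinuousAt r (xc i)) (z : Solenoid r) (i : ZMod p)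
    (h : Tendsto (fun n : ℕ => z.1 ((p : ℤ) * (n : ℤ))) atTop (𝓝 (xc i))) (j : ℕ) :
    Tendsto (fun n : ℕ => z.1 ((p * n + j : ℕ) : ℤ)) atTop (𝓝 (xc (i + j))) := by
  have h1 := (tendsto_sub hcyc hrc z i h ((p - 1) * j)).comp (tendsto_add_atTop_nat j)
  convert h1 using 2
  · rename_i n
    simp only [Function.comp]
    congr 1
    push_cast [Nat.cast_sub (show 1 ≤ p from hp)]
    ring
  · congr 1
    push_cast [Nat.cast_sub (show 1 ≤ p from hp)]
    simp

lemma evt_near (hp : 0 < p) (hcyc : ∀ i : ZMod p, r (xc (i + 1)) = xc i)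
    (hrc : ∀ i : ZMod p, ContinuousAt r (xc i)) (z : Solenoid r) (i : ZMod p)
    (h : Tendsto (fun n : ℕ => z.1 ((p : ℤ) * (n : ℤ))) atTop (𝓝 (xc i)))
    {Q : ZMod p → X → Prop} (hQ : ∀ i, ∀ᶠ y in 𝓝 (xc i), Q i y) :
    ∀ᶠ k : ℕ in atTop, Q (i + k) (z.1 (k : ℤ)) := by
  apply evt_of_residues hp
  intro j
  filter_upwards [(sol_tendsto_add hp hcyc hrc z i h j).eventually (hQ (i + j))] with n hn
  convert hn using 2
  push_cast
  simp

lemma m0_cont {β : ℝ → ℝ} (hβmono : MonotoneOn β (Set.Ici 0))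
    (hβsum : ∀ A : ℝ, 0 < A → ∀ c : ℝ, 0 < c → c < 1 →
      Summable fun k : ℕ => β (A * c ^ (k + 1))) {m0 : X → ℂ} {a : X}
    (hβlip : ∀ᶠ y in 𝓝 a, ‖m0 y - m0 a‖ ≤ β (dist y a)) : ContinuousAt m0 a := by
  rw [Metric.continuousAt_iff']
  intro ε hε
  have h0 := (hβsum 1 one_pos (1/2) (by norm_num) (by norm_num)).tendsto_atTop_zero
  obtain ⟨k, hk⟩ := (h0.eventually (gt_mem_nhds hε)).exists
  filter_upwards [hβlip, Metric.ball_mem_nhds a (show (0:ℝ) < 1 * (1/2)^(k+1) by positivity)]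
    with y hy hy2
  rw [dist_eq_norm]
  refine hy.trans_lt (lt_of_le_of_lt (hβmono dist_nonneg ?_ (Metric.mem_ball.1 hy2).le) hk)
  simp only [Set.mem_Ici]; positivity

lemma card_loc (hcyc : ∀ i : ZMod p, r (xc (i + 1)) = xc i)
    (hrc : ∀ i : ZMod p, ContinuousAt r (xc i))
    (hcc : ∀ i : ZMod p, ∀ᶠ y in 𝓝 (xc i), Nat.card (r ⁻¹' {y}) = Nat.card (r ⁻¹' {xc i}))
    (i : ZMod p) :
    ∀ᶠ y in 𝓝 (xc i), Nat.card (r ⁻¹' {r y}) = Nat.card (r ⁻¹' {r (xc i)}) := by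
  have := hcc (i - 1)
  rw [← cyc_pred hcyc] at this
  exact (hrc i).eventually this

lemma local_inj (hp : 0 < p) (hfin : ∀ x : X, (r ⁻¹' {x}).Finite)
    (hne : ∀ x : X, (r ⁻¹' {x}).Nonempty)
    (hcyc : ∀ i : ZMod p, r (xc (i + 1)) = xc i)
    (hrc : ∀ i : ZMod p, ContinuousAt r (xc i))
    (hcc : ∀ i : ZMod p, ∀ᶠ y in 𝓝 (xc i), Nat.card (r ⁻¹' {y}) = Nat.card (r ⁻¹' {xc i}))
    {m0 : X → ℂ} (hm : ∀ i, ContinuousAt m0 (xc i)) {α : ZMod p → ℂ} (hα : ∀ i, ‖α i‖ = 1)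
    (hqmf : ∀ x : X,
      (Nat.card (r ⁻¹' {x}) : ℝ)⁻¹ * ∑' y : r ⁻¹' {x}, ‖m0 y.1‖ ^ 2 = 1)
    (hlp : ∀ i : ZMod p, m0 (xc i) = α i * (Real.sqrt (Nat.card (r ⁻¹' {r (xc i)})) : ℂ)) :
    ∃ δ > 0, ∀ i y y', dist y (xc i) < δ → dist y' (xc i) < δ → r y = r y' → y = y' := by
  have : NeZero p := ⟨hp.ne'⟩
  have key : ∀ i, ∃ δ > 0, ∀ y y', dist y (xc i) < δ → dist y' (xc i) < δ → r y = r y' → y = y' := by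
    intro i
    have hc := card_fib_pos hfin hne (r (xc i))
    have hn : ‖m0 (xc i)‖ ^ 2 = Nat.card (r ⁻¹' {r (xc i)}) := by
      rw [hlp, norm_mul, hα, one_mul, Complex.norm_real, Real.norm_eq_abs, sq_abs,
        Real.sq_sqrt (by positivity)]
    have h1 : ∀ᶠ y in 𝓝 (xc i), (Nat.card (r ⁻¹' {r (xc i)}) : ℝ) / 2 < ‖m0 y‖ ^ 2 := by
      have : Tendsto (fun y => ‖m0 y‖ ^ 2) (𝓝 (xc i)) (𝓝 (‖m0 (xc i)‖ ^ 2)) :=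
        ((hm i).norm.pow 2)
      refine this.eventually (lt_mem_nhds ?_)
      rw [hn]; linarith
    obtain ⟨δ, hδ, hb⟩ := Metric.eventually_nhds_iff.1 (h1.and (card_loc hcyc hrc hcc i))
    refine ⟨δ, hδ, fun y y' hy hy' he => ?_⟩
    by_contra hyy
    obtain ⟨a1, a2⟩ := hb hy
    obtain ⟨b1, -⟩ := hb hy'
    have q := hqmf (r y)
    rw [a2] at q
    have := (hfin (r y)).to_subtype
    let _ := Fintype.ofFinite (r ⁻¹' {r y})
    have hs : Summable fun y : r ⁻¹' {r y} => ‖m0 y.1‖ ^ 2 := (hasSum_fintype _).summable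
    have hne' : (⟨y, rfl⟩ : r ⁻¹' {r y}) ≠ ⟨y', he.symm⟩ := fun h => hyy (congrArg Subtype.val h)
    classical
    have h2 := hs.sum_le_tsum {(⟨y, rfl⟩ : r ⁻¹' {r y}), ⟨y', he.symm⟩}
      (fun _ _ => by positivity)
    rw [Finset.sum_pair hne'] at h2
    have h3 : ∑' y : r ⁻¹' {r y}, ‖m0 y.1‖ ^ 2 = Nat.card (r ⁻¹' {r (xc i)}) := by
      field_simp at q
      exact q
    rw [h3] at h2
    simp only at h2
    linarith
  choose δ hδ h using key
  obtain ⟨i0, -, h0⟩ := Finset.exists_min_image Finset.univ δ ⟨0, Finset.mem_univ _⟩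
  exact ⟨δ i0, hδ i0, fun i y y' hy hy' => h i y y' (hy.trans_le (h0 i (Finset.mem_univ _)))
    (hy'.trans_le (h0 i (Finset.mem_univ _)))⟩

lemma dist_summable' (hp : 0 < p) (hcyc : ∀ i : ZMod p, r (xc (i + 1)) = xc i)
    (hrc : ∀ i : ZMod p, ContinuousAt r (xc i))
    (hrep : ∀ i : ZMod p, ∃ c δ : ℝ, 0 < c ∧ c < 1 ∧ 0 < δ ∧ ∀ x : X,
      0 < dist x (xc i) → dist x (xc i) < δ → c⁻¹ * dist x (xc i) < dist (r^[p] x) (xc i))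
    {β : ℝ → ℝ} (hβmono : MonotoneOn β (Set.Ici 0)) (hβ0 : ∀ t : ℝ, 0 ≤ t → 0 ≤ β t)
    (hβsum : ∀ A : ℝ, 0 < A → ∀ c : ℝ, 0 < c → c < 1 →
      Summable fun k : ℕ => β (A * c ^ (k + 1)))
    (z : Solenoid r) (i : ZMod p)
    (h : Tendsto (fun n : ℕ => z.1 ((p : ℤ) * (n : ℤ))) atTop (𝓝 (xc i))) :
    Summable fun k : ℕ => β (dist (z.1 (k : ℤ)) (xc (i + k))) := by
  have : NeZero p := ⟨hp.ne'⟩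
  have hres : ∀ j : ℕ, Summable fun n : ℕ => β (dist (z.1 ((p * n + j : ℕ) : ℤ)) (xc (i + j))) := by
    intro j
    obtain ⟨c, δ, hc0, hc1, hδ, hx⟩ := hrep (i + j)
    have ht := sol_tendsto_add hp hcyc hrc z i h j
    obtain ⟨N, hN⟩ := eventually_atTop.1 (ht.eventually (Metric.ball_mem_nhds _ hδ))
    set d : ℕ → ℝ := fun n => dist (z.1 ((p * n + j : ℕ) : ℤ)) (xc (i + j)) with hd
    have hstep : ∀ n, N ≤ n → d (n + 1) ≤ c * d n := by
      intro n hn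
      rcases (dist_nonneg (x := z.1 ((p * (n+1) + j : ℕ) : ℤ)) (y := xc (i + j))).eq_or_lt with h0 | h0
      · have : d (n+1) = 0 := h0.symm
        rw [this]
        exact mul_nonneg hc0.le dist_nonneg
      · have h2 := hx _ h0 (hN (n+1) (by omega))
        have h3 : r^[p] (z.1 ((p * (n+1) + j : ℕ) : ℤ)) = z.1 ((p * n + j : ℕ) : ℤ) := by
          rw [← sol_iter z p ((p * n + j : ℕ) : ℤ)]
          congr 2
          push_cast; ring
        rw [h3] at h2
        have h4 : c⁻¹ * d (n+1) < d n := h2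
        rw [inv_mul_lt_iff₀ hc0] at h4
        exact h4.le
    have hgeo : ∀ m, d (m + N) ≤ c ^ m * d N := by
      intro m
      induction m with
      | zero => simp
      | succ m ih =>
        have := hstep (m + N) (by omega)
        rw [show m + 1 + N = m + N + 1 by ring]
        refine this.trans ((mul_le_mul_of_nonneg_left ih hc0.le).trans (le_of_eq ?_))
        ring
    have hd0 : ∀ n, 0 ≤ d n := fun n => dist_nonneg
    rw [← summable_nat_add_iff N]
    refine Summable.of_nonneg_of_le (fun m => hβ0 _ dist_nonneg) (fun m => ?_)
      (hβsum ((d N + 1) / c) (div_pos (by linarith [hd0 N]) hc0) c hc0 hc1)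
    have hle : d (m + N) ≤ (d N + 1) / c * c ^ (m + 1) := by
      refine (hgeo m).trans ?_
      have : (d N + 1) / c * c ^ (m + 1) = c ^ m * (d N + 1) := by
        field_simp
        ring
      rw [this]
      gcongr
      linarith
    exact hβmono (hd0 _) ((hd0 _).trans hle) hle
  rw [← (Nat.divModEquiv p).symm.summable_iff, ← (Equiv.prodComm _ _).summable_iff]
  refine (summable_prod_of_nonneg (fun _ => hβ0 _ dist_nonneg)).2 ⟨fun j => ?_, (hasSum_fintype _).summable⟩
  refine (hres j.1).congr fun n => ?_
  simp only [Function.comp, Equiv.prodComm_apply, Prod.swap_prod_mk, Nat.divModEquiv_symm_apply]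
  have e : n * p + j.1 = p * n + j.1 := by ring
  rw [e]
  push_cast
  simp

lemma mult_factors (hp : 0 < p) (hfin : ∀ x : X, (r ⁻¹' {x}).Finite)
    (hne : ∀ x : X, (r ⁻¹' {x}).Nonempty)
    (hcyc : ∀ i : ZMod p, r (xc (i + 1)) = xc i)
    (hrc : ∀ i : ZMod p, ContinuousAt r (xc i))
    (hcc : ∀ i : ZMod p, ∀ᶠ y in 𝓝 (xc i), Nat.card (r ⁻¹' {y}) = Nat.card (r ⁻¹' {xc i}))
    {m0 : X → ℂ} {α : ZMod p → ℂ} (hα : ∀ i, ‖α i‖ = 1)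
    (hlp : ∀ i : ZMod p, m0 (xc i) = α i * (Real.sqrt (Nat.card (r ⁻¹' {r (xc i)})) : ℂ))
    (hrep : ∀ i : ZMod p, ∃ c δ : ℝ, 0 < c ∧ c < 1 ∧ 0 < δ ∧ ∀ x : X,
      0 < dist x (xc i) → dist x (xc i) < δ → c⁻¹ * dist x (xc i) < dist (r^[p] x) (xc i))
    {β : ℝ → ℝ} (hβmono : MonotoneOn β (Set.Ici 0)) (hβ0 : ∀ t : ℝ, 0 ≤ t → 0 ≤ β t)
    (hβsum : ∀ A : ℝ, 0 < A → ∀ c : ℝ, 0 < c → c < 1 →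
      Summable fun k : ℕ => β (A * c ^ (k + 1)))
    (hβlip : ∀ i : ZMod p, ∀ᶠ y in 𝓝 (xc i), ‖m0 y - m0 (xc i)‖ ≤ β (dist y (xc i)))
    (z : Solenoid r) (i : ZMod p)
    (h : Tendsto (fun n : ℕ => z.1 ((p : ℤ) * (n : ℤ))) atTop (𝓝 (xc i))) :
    Multipliable fun k : ℕ => (α (i + ((k + 1 : ℕ) : ZMod p)))⁻¹ * m0 (z.1 ((k : ℤ) + 1)) /
    (Real.sqrt (Nat.card (r ⁻¹' {r (z.1 ((k : ℤ) + 1))})) : ℂ) := by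
  have hs := dist_summable' hp hcyc hrc hrep hβmono hβ0 hβsum z i h
  have hev := evt_near hp hcyc hrc z i h (fun i => (hβlip i).and (card_loc hcyc hrc hcc i))
  set g : ℕ → ℂ := fun k => (α (i + (k : ZMod p)))⁻¹ * m0 (z.1 (k : ℤ)) /
    (Real.sqrt (Nat.card (r ⁻¹' {r (z.1 (k : ℤ))})) : ℂ) - 1 with hg
  have hgs : Summable fun k => ‖g k‖ := by
    refine Summable.of_norm_bounded_eventually_nat hs ?_
    filter_upwards [hev] with k hk
    obtain ⟨h1, h2⟩ := hk
    rw [norm_norm]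
    have hc := card_fib_pos hfin hne (r (xc (i + k)))
    have hsq : 1 ≤ Real.sqrt (Nat.card (r ⁻¹' {r (xc (i + k))})) := Real.one_le_sqrt.2 hc
    have hα0 : α (i + k) ≠ 0 := fun h0 => by
      have := hα (i + k); rw [h0] at this; simp at this
    have hsq0 : (Real.sqrt (Nat.card (r ⁻¹' {r (xc (i + k))})) : ℂ) ≠ 0 := by
      rw [Complex.ofReal_ne_zero]; linarith
    have : g k = (α (i + k))⁻¹ * (m0 (z.1 k) - m0 (xc (i + k))) /
        (Real.sqrt (Nat.card (r ⁻¹' {r (xc (i + k))})) : ℂ) := by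
      simp only [hg]
      rw [h2, hlp]
      field_simp
    rw [this, norm_div, norm_mul, norm_inv, hα, inv_one, one_mul, Complex.norm_real,
      Real.norm_of_nonneg (by linarith)]
    exact (div_le_self (norm_nonneg _) hsq).trans h1
  have hgs1 : Summable fun k => ‖g (k + 1)‖ := (summable_nat_add_iff 1).2 hgs
  have := multipliable_one_add_of_summable hgs1
  refine this.congr fun k => ?_
  simp only [hg, add_sub_cancel]
  push_cast
  rfl

end Dyn
section Wt
set_option linter.unusedSectionVars false

/-- The squared weights. -/
def wt {X : Type*} (r : X → X) (m0 : X → ℂ) (y : X) : ℝ :=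
  ‖m0 y‖ ^ 2 / (Nat.card (r ⁻¹' {r y}) : ℝ)

variable {X : Type*} {r : X → X} {m0 : X → ℂ}

lemma wt_nonneg (y : X) : 0 ≤ wt r m0 y := by unfold wt; positivity

lemma sum_wt_fib (hfin : ∀ x : X, (r ⁻¹' {x}).Finite)
    (hqmf : ∀ x : X,
      (Nat.card (r ⁻¹' {x}) : ℝ)⁻¹ * ∑' y : r ⁻¹' {x}, ‖m0 y.1‖ ^ 2 = 1)
    (x : X) (Y : Finset X) (hY : ∀ y ∈ Y, r y = x) : ∑ y ∈ Y, wt r m0 y ≤ 1 := by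
  classical
  rw [← hqmf x]
  have := (hfin x).to_subtype
  let _ := Fintype.ofFinite (r ⁻¹' {x})
  have h1 : ∑ y ∈ Y, wt r m0 y = (Nat.card (r ⁻¹' {x}) : ℝ)⁻¹ * ∑ y ∈ Y, ‖m0 y‖ ^ 2 := by
    rw [Finset.mul_sum]
    refine Finset.sum_congr rfl fun y hy => ?_
    rw [wt, hY y hy, div_eq_inv_mul]
  rw [h1]
  refine mul_le_mul_of_nonneg_left ?_ (by positivity)
  have hs : Summable fun y : r ⁻¹' {x} => ‖m0 y.1‖ ^ 2 := (hasSum_fintype _).summable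
  have h2 := hs.sum_le_tsum (Y.subtype (· ∈ r ⁻¹' {x})) (fun _ _ => by positivity)
  refine le_trans (le_of_eq ?_) h2
  rw [Finset.sum_subtype_of_mem (fun y => ‖m0 y‖ ^ 2)]
  intro y hy
  exact hY y hy

lemma sum_wt_le (hfin : ∀ x : X, (r ⁻¹' {x}).Finite)
    (hqmf : ∀ x : X,
      (Nat.card (r ⁻¹' {x}) : ℝ)⁻¹ * ∑' y : r ⁻¹' {x}, ‖m0 y.1‖ ^ 2 = 1) (x : X) (n : ℕ) :
    ∀ (Y : Finset X), (∀ y ∈ Y, r^[n] y = x) →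
    ∑ y ∈ Y, ∏ j ∈ Finset.range n, wt r m0 (r^[j] y) ≤ 1 := by
  classical
  induction n with
  | zero =>
    intro Y hY
    simp only [Finset.range_zero, Finset.prod_empty, Finset.sum_const, nsmul_eq_mul, mul_one]
    have : Y.card ≤ 1 := Finset.card_le_one.2 fun a ha b hb => by
      have h1 := hY a ha
      have h2 := hY b hb
      simp at h1 h2
      rw [h1, h2]
    exact_mod_cast this
  | succ n ih =>
    intro Y hY
    have h := ih (Y.image r) (by
      intro u hu
      obtain ⟨y, hy, rfl⟩ := Finset.mem_image.1 hu
      exact hY y hy)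
    refine le_trans ?_ h
    rw [← Finset.sum_fiberwise_of_maps_to (g := r) (t := Y.image r)
      (fun y hy => Finset.mem_image_of_mem r hy)]
    refine Finset.sum_le_sum fun u _ => ?_
    have e : ∀ y ∈ Y.filter (fun y => r y = u), ∏ j ∈ Finset.range (n+1), wt r m0 (r^[j] y) =
        (∏ j ∈ Finset.range n, wt r m0 (r^[j] u)) * wt r m0 y := by
      intro y hy
      rw [Finset.prod_range_succ']
      simp only [Function.iterate_succ_apply, (Finset.mem_filter.1 hy).2, Function.iterate_zero,
        id]
    rw [Finset.sum_congr rfl e, ← Finset.mul_sum]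
    refine mul_le_of_le_one_right (Finset.prod_nonneg fun _ _ => wt_nonneg _) ?_
    exact sum_wt_fib hfin hqmf u _ fun y hy => (Finset.mem_filter.1 hy).2

lemma sol_ext (z z' : Solenoid r) (h : ∀ᶠ n : ℕ in atTop, z.1 (n : ℤ) = z'.1 (n : ℤ)) : z = z' := by
  apply Subtype.ext
  funext k
  obtain ⟨n, hn, hk⟩ := (h.and (eventually_ge_atTop k.natAbs)).exists
  have e : k + ((n - k).toNat : ℤ) = n := by omega
  have h1 := sol_iter z (n - k).toNat k
  have h2 := sol_iter z' (n - k).toNat k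
  rw [e] at h1 h2
  rw [← h1, ← h2, hn]

lemma sol_ne (z z' : Solenoid r) (h : z ≠ z') : ∀ᶠ n : ℕ in atTop, z.1 (n : ℤ) ≠ z'.1 (n : ℤ) := by
  by_contra hcon
  apply h
  apply sol_ext
  rw [Filter.not_eventually] at hcon
  refine Eventually.of_forall fun n => ?_
  obtain ⟨m, hm, he⟩ := (frequently_atTop.1 hcon) n
  rw [not_not] at he
  have e : (n : ℤ) + ((m - n : ℕ) : ℤ) = m := by omega
  have h1 := sol_iter z (m - n) n
  have h2 := sol_iter z' (m - n) n
  rw [e] at h1 h2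
  rw [← h1, ← h2, he]

lemma sum_phi_le (hfin : ∀ x : X, (r ⁻¹' {x}).Finite)
    (hqmf : ∀ x : X,
      (Nat.card (r ⁻¹' {x}) : ℝ)⁻¹ * ∑' y : r ⁻¹' {x}, ‖m0 y.1‖ ^ 2 = 1)
    {p : ℕ} {α : ZMod p → ℂ} (hα : ∀ i, ‖α i‖ = 1) {ι : Solenoid r → ZMod p} (x : X)
    (S : Finset (Solenoid r)) (hS0 : ∀ z ∈ S, z.1 0 = x)
    (hS : ∀ z ∈ S, Multipliable fun k : ℕ => (α (ι z + ((k + 1 : ℕ) : ZMod p)))⁻¹ *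
      m0 (z.1 ((k : ℤ) + 1)) / (Real.sqrt (Nat.card (r ⁻¹' {r (z.1 ((k : ℤ) + 1))})) : ℂ)) :
    ∑ z ∈ S, ‖scalingFn r α ι m0 z‖ ^ 2 ≤ 1 := by
  classical
  have ht : ∀ z ∈ S, Tendsto (fun n : ℕ => ∏ j ∈ Finset.range n, wt r m0 (r^[j] (z.1 (n : ℤ))))
      atTop (𝓝 (‖scalingFn r α ι m0 z‖ ^ 2)) := by
    intro z hz
    have h1 := ((hS z hz).tendsto_prod_tprod_nat.norm.pow 2)
    refine h1.congr fun n => ?_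
    rw [norm_prod, ← Finset.prod_pow, ← Finset.prod_range_reflect]
    refine Finset.prod_congr rfl fun j hj => ?_
    have hj' := Finset.mem_range.1 hj
    have e : r^[j] (z.1 (n : ℤ)) = z.1 (((n - 1 - j : ℕ) : ℤ) + 1) := by
      rw [← sol_iter z j (((n - 1 - j : ℕ) : ℤ) + 1),
        show ((n - 1 - j : ℕ) : ℤ) + 1 + (j : ℤ) = n by omega]
    rw [e, wt, norm_div, norm_mul, norm_inv, hα, inv_one, one_mul, Complex.norm_real, div_pow,
      Real.norm_eq_abs, sq_abs, Real.sq_sqrt (by positivity)]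
  have ht2 := tendsto_finsetSum S ht
  refine le_of_tendsto ht2 ?_
  have hd : ∀ᶠ n : ℕ in atTop, ∀ z ∈ S, ∀ z' ∈ S, z ≠ z' → z.1 (n : ℤ) ≠ z'.1 (n : ℤ) := by
    rw [Filter.eventually_all_finset]
    intro z _
    rw [Filter.eventually_all_finset]
    intro z' _
    by_cases h : z = z'
    · simp [h]
    · filter_upwards [sol_ne z z' h] with n hn _ using hn
  filter_upwards [hd] with n hn
  have h3 := sum_wt_le hfin hqmf x n (S.image fun z => z.1 (n : ℤ)) (by
    intro y hy
    obtain ⟨z, hz, rfl⟩ := Finset.mem_image.1 hy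
    have := sol_iter z n 0
    rw [zero_add] at this
    rw [this, hS0 z hz])
  rwa [Finset.sum_image] at h3
  intro z hz z' hz' h
  by_contra hne
  exact hn z hz z' hz' hne h

end Wt

section Trans
set_option linter.unusedSectionVars false
variable {X : Type*} [MetricSpace X] [CompactSpace X] [MeasurableSpace X] [BorelSpace X]
  {r : X → X} {p : ℕ} {xc : ZMod p → X}

lemma solenoid_sb (hr : Measurable r) : StandardBorelSpace (Solenoid r) := by
  have : MeasurableSet {z : ℤ → X | ∀ n : ℤ, r (z (n + 1)) = z n} := by
    rw [Set.ofPred_forall]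
    refine MeasurableSet.iInter fun n => ?_
    exact measurableSet_eq_fun (hr.comp (measurable_pi_apply _)) (measurable_pi_apply _)
  exact this.standardBorel

lemma meas_eval (n : ℤ) : Measurable fun z : Solenoid r => z.1 n :=
  (measurable_pi_apply n).comp measurable_subtype_coe

lemma measN (hp : 0 < p) : MeasurableSet {z : Solenoid r | ∃ i : ZMod p,
    Tendsto (fun n : ℕ => z.1 ((p : ℤ) * (n : ℤ))) atTop (𝓝 (xc i))} := by
  have : NeZero p := ⟨hp.ne'⟩
  rw [Set.ofPred_exists]
  refine MeasurableSet.iUnion fun i => ?_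
  exact measurableSet_tendsto _ (fun n => meas_eval _)

lemma proj_null {ρ : Measure X} [IsProbabilityMeasure ρ] (hp : 0 < p) (hr : Measurable r)
    (hfin : ∀ x : X, (r ⁻¹' {x}).Finite)
    (hne : ∀ x : X, (r ⁻¹' {x}).Nonempty)
    (hsi : ∀ f : X → ℝ, Measurable f → (∃ M : ℝ, ∀ x, |f x| ≤ M) →
      ∫ x, f x ∂ρ = ∫ x, (Nat.card (r ⁻¹' {x}) : ℝ)⁻¹ * ∑' y : r ⁻¹' {x}, f y.1 ∂ρ)
    (hcyc : ∀ i : ZMod p, r (xc (i + 1)) = xc i)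
    (hrc : ∀ i : ZMod p, ContinuousAt r (xc i))
    (hinj : ∃ δ > 0, ∀ i y y', dist y (xc i) < δ → dist y' (xc i) < δ → r y = r y' → y = y')
    {G : Set (Solenoid r)} (hG : MeasurableSet G) :
    NullMeasurableSet {x | ∃ ω ∈ NC r xc x, ω ∈ G} ρ := by
  have : NeZero p := ⟨hp.ne'⟩
  have := solenoid_sb hr
  obtain ⟨δ, hδ, hinj⟩ := hinj
  set N : Set (Solenoid r) := {z : Solenoid r | ∃ i : ZMod p,
    Tendsto (fun n : ℕ => z.1 ((p : ℤ) * (n : ℤ))) atTop (𝓝 (xc i))} with hN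
  set E : ℕ → ZMod p → Set (Solenoid r) := fun n i =>
    (G ∩ N) ∩ ⋂ k : ℕ, {z | dist (z.1 ((n + k : ℕ) : ℤ)) (xc (i + (n + k : ℕ))) < δ} with hE
  have hEm : ∀ n i, MeasurableSet (E n i) := by
    intro n i
    refine (hG.inter (measN hp)).inter (MeasurableSet.iInter fun k => ?_)
    exact measurableSet_lt ((meas_eval _).dist measurable_const) measurable_const
  have hset : {x | ∃ ω ∈ NC r xc x, ω ∈ G} =
      ⋃ n : ℕ, ⋃ i : ZMod p, r^[n] '' ((fun z : Solenoid r => z.1 (n : ℤ)) '' (E n i)) := by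
    ext x
    simp only [Set.mem_ofPred_eq, Set.mem_iUnion]
    constructor
    · rintro ⟨ω, ⟨h0, i, hi⟩, hω⟩
      have := evt_near hp hcyc hrc ω i hi (Q := fun i y => dist y (xc i) < δ)
        (fun i => Metric.ball_mem_nhds _ hδ)
      obtain ⟨n, hn⟩ := eventually_atTop.1 this
      refine ⟨n, i, ω.1 n, ⟨ω, ⟨⟨hω, i, hi⟩, Set.mem_iInter.2 fun k => hn (n + k) (by omega)⟩, rfl⟩, ?_⟩
      have := sol_iter ω n 0
      rw [zero_add] at this
      rw [this, h0]
    · rintro ⟨n, i, _, ⟨ω, ⟨⟨hω, hNω⟩, _⟩, rfl⟩, hx⟩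
      have := sol_iter ω n 0
      rw [zero_add] at this
      exact ⟨ω, ⟨by rw [← hx]; exact this.symm, hNω⟩, hω⟩
  rw [hset]
  refine NullMeasurableSet.iUnion fun n => NullMeasurableSet.iUnion fun i => ?_
  refine iter_image_nullMeas hfin hne hsi n (MeasurableSet.nullMeasurableSet ?_)
  refine (hEm n i).image_of_measurable_injOn (meas_eval _) ?_
  intro z hz z' hz' h
  have hk : ∀ k : ℕ, z.1 ((n + k : ℕ) : ℤ) = z'.1 ((n + k : ℕ) : ℤ) := by
    intro k
    induction k with
    | zero => exact h
    | succ k ih =>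
      refine hinj _ _ _ (Set.mem_iInter.1 hz.2 (k+1)) (Set.mem_iInter.1 hz'.2 (k+1)) ?_
      have h1 := z.2 ((n + k : ℕ) : ℤ)
      have h2 := z'.2 ((n + k : ℕ) : ℤ)
      rw [show (((n + (k + 1) : ℕ)) : ℤ) = ((n + k : ℕ) : ℤ) + 1 by push_cast; ring, h1, h2, ih]
  apply sol_ext
  refine eventually_atTop.2 ⟨n, fun m hm => ?_⟩
  have := hk (m - n)
  rwa [Nat.add_sub_cancel' hm] at this

lemma null_transfer {ρ : Measure X} {lamC : Measure (Solenoid r)}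
    (hlam : ∀ F : Solenoid r → ℝ≥0∞, Measurable F →
      ∫⁻ z, F z ∂lamC = ∫⁻ x, ∑' ω : NC r xc x, F ω.1 ∂ρ)
    (hproj : ∀ G : Set (Solenoid r), MeasurableSet G →
      NullMeasurableSet {x | ∃ ω ∈ NC r xc x, ω ∈ G} ρ)
    {P : Solenoid r → Prop} (hP : ∀ᵐ z ∂lamC, P z) :
    ∀ᵐ x ∂ρ, ∀ ω ∈ NC r xc x, P ω := by
  obtain ⟨G, hPG, hG, h0⟩ := exists_measurable_superset_of_null (ae_iff.1 hP)
  have h1 := hlam (G.indicator 1) (measurable_one.indicator hG)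
  rw [lintegral_indicator_one hG, h0] at h1
  set A := {x | ∃ ω ∈ NC r xc x, ω ∈ G} with hA
  have h2 : ρ A ≤ 0 := by
    rw [← lintegral_indicator_one₀ (hproj G hG), h1]
    refine lintegral_mono fun x => ?_
    by_cases hx : x ∈ A
    · rw [Set.indicator_of_mem hx]
      obtain ⟨ω, hω, hωG⟩ := hx
      refine le_trans ?_ (ENNReal.le_tsum (⟨ω, hω⟩ : NC r xc x))
      simp [hωG]
    · rw [Set.indicator_of_notMem hx]; exact zero_le
  have h3 : ∀ᵐ x ∂ρ, x ∉ A := by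
    rw [ae_iff]; simpa using h2
  filter_upwards [h3] with x hx ω hω
  by_contra hcon
  exact hx ⟨ω, hω, hPG hcon⟩

lemma null_transfer' {ρ : Measure X} {lamC : Measure (Solenoid r)}
    (hlam : ∀ F : Solenoid r → ℝ≥0∞, Measurable F →
      ∫⁻ z, F z ∂lamC = ∫⁻ x, ∑' ω : NC r xc x, F ω.1 ∂ρ)
    {G : Set (Solenoid r)} (hG : MeasurableSet G)
    (hP : ∀ᵐ x ∂ρ, ∀ ω ∈ NC r xc x, ω ∉ G) : lamC G = 0 := by
  rw [← lintegral_indicator_one hG, hlam (G.indicator 1) (measurable_one.indicator hG)]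
  refine (lintegral_congr_ae ?_).trans lintegral_zero
  filter_upwards [hP] with x hx
  simp only [ENNReal.tsum_eq_zero]
  intro ω
  exact Set.indicator_of_notMem (hx ω.1 ω.2) _

lemma meas_shift : Measurable (shiftHat r) := by
  refine Measurable.subtype_mk ?_
  exact measurable_pi_lambda _ fun n => meas_eval (n - 1)

lemma shift_NC (hcyc : ∀ i : ZMod p, r (xc (i + 1)) = xc i)
    (hrc : ∀ i : ZMod p, ContinuousAt r (xc i)) {ω : Solenoid r} {i : ZMod p}
    (h : Tendsto (fun n : ℕ => ω.1 ((p : ℤ) * (n : ℤ))) atTop (𝓝 (xc i))) :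
    Tendsto (fun n : ℕ => (shiftHat r ω).1 ((p : ℤ) * (n : ℤ))) atTop (𝓝 (xc (i - 1))) := by
  have := tendsto_sub hcyc hrc ω i h 1
  simpa [shiftHat] using this

end Trans
section JJ
variable {X Ω : Type*} [MeasurableSpace X] [MeasurableSpace Ω] {lam : Measure Ω}
  {φ : Lp ℂ 2 lam} {q : Ω → X} {μh : Measure X}

lemma phi_meas (φ : Lp ℂ 2 lam) : Measurable fun z => ‖φ z‖ₑ ^ 2 :=
  (Lp.stronglyMeasurable φ).measurable.enorm.pow_const 2

lemma ae_pull (hq : Measurable q) (hμ : μh = (lam.withDensity fun z => ‖φ z‖ₑ ^ 2).map q)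
    {f g : X → ℂ} (h : f =ᵐ[μh] g) :
    (fun z => f (q z) * φ z) =ᵐ[lam] fun z => g (q z) * φ z := by
  rw [hμ] at h
  have h1 := ae_of_ae_map hq.aemeasurable h
  rw [ae_withDensity_iff (phi_meas φ)] at h1
  filter_upwards [h1] with z hz
  by_cases h0 : φ z = 0
  · simp [h0]
  · rw [hz (by simpa using h0)]

lemma eLp_pull (hq : Measurable q) (hμ : μh = (lam.withDensity fun z => ‖φ z‖ₑ ^ 2).map q)
    {f : X → ℂ} (hf : Measurable f) :
    eLpNorm (fun z => f (q z) * φ z) 2 lam = eLpNorm f 2 μh := by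
  rw [eLpNorm_eq_lintegral_rpow_enorm_toReal two_ne_zero ENNReal.ofNat_ne_top,
    eLpNorm_eq_lintegral_rpow_enorm_toReal two_ne_zero ENNReal.ofNat_ne_top]
  congr 1
  simp only [ENNReal.toReal_ofNat, ENNReal.rpow_ofNat]
  have hf2 : Measurable fun x => ‖f x‖ₑ ^ 2 := hf.enorm.pow_const 2
  have hf3 : Measurable fun z => ‖f (q z)‖ₑ ^ 2 := hf2.comp hq
  rw [hμ, lintegral_map hf2 hq,
    lintegral_withDensity_eq_lintegral_mul _ (phi_meas φ) hf3]
  refine lintegral_congr fun z => ?_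
  simp only [Pi.mul_apply, enorm_mul, mul_pow]
  ring

lemma memLp_pull (hq : Measurable q) (hμ : μh = (lam.withDensity fun z => ‖φ z‖ₑ ^ 2).map q)
    (g : Lp ℂ 2 μh) : MemLp (fun z => g (q z) * φ z) 2 lam := by
  have hg := (Lp.stronglyMeasurable g).measurable
  refine ⟨?_, ?_⟩
  · exact ((hg.comp hq).mul (Lp.stronglyMeasurable φ).measurable).aestronglyMeasurable
  · rw [eLp_pull hq hμ hg]
    exact Lp.eLpNorm_lt_top g

lemma exists_J (hq : Measurable q) (hμ : μh = (lam.withDensity fun z => ‖φ z‖ₑ ^ 2).map q) :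
    ∃ J : Lp ℂ 2 μh →ₗᵢ[ℂ] Lp ℂ 2 lam, ∀ g, J g =ᵐ[lam] fun z => g (q z) * φ z := by
  refine ⟨{ toFun := fun g => (memLp_pull hq hμ g).toLp _
            map_add' := ?_
            map_smul' := ?_
            norm_map' := ?_ }, ?_⟩
  · intro g g'
    apply Lp.ext
    filter_upwards [(memLp_pull hq hμ (g + g')).coeFn_toLp, (memLp_pull hq hμ g).coeFn_toLp,
      (memLp_pull hq hμ g').coeFn_toLp, Lp.coeFn_add ((memLp_pull hq hμ g).toLp _)
        ((memLp_pull hq hμ g').toLp _), ae_pull hq hμ (Lp.coeFn_add g g')] with z h1 h2 h3 h4 h5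
    rw [h1, h4, h5, Pi.add_apply, Pi.add_apply, h2, h3, add_mul]
  · intro c g
    apply Lp.ext
    filter_upwards [(memLp_pull hq hμ (c • g)).coeFn_toLp, (memLp_pull hq hμ g).coeFn_toLp,
      Lp.coeFn_smul c ((memLp_pull hq hμ g).toLp _),
      ae_pull hq hμ (Lp.coeFn_smul c g)] with z h1 h2 h4 h5
    simp only [RingHom.id_apply]
    rw [h1, h4, h5, Pi.smul_apply, Pi.smul_apply, h2, smul_eq_mul, smul_eq_mul, mul_assoc]
  · intro g
    simp only [LinearMap.coe_mk, AddHom.coe_mk]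
    rw [Lp.norm_toLp, Lp.norm_def, eLp_pull hq hμ (Lp.stronglyMeasurable g).measurable]
  · intro g
    exact (memLp_pull hq hμ g).coeFn_toLp

end JJ

theorem statement13
    {X : Type*} [MetricSpace X] [CompactSpace X] [MeasurableSpace X] [BorelSpace X]
    (r : X → X) (hr : Measurable r)
    (hfin : ∀ x : X, (r ⁻¹' {x}).Finite) (hne : ∀ x : X, (r ⁻¹' {x}).Nonempty)
    (ρ : Measure X) [IsProbabilityMeasure ρ]
    (hsi : ∀ f : X → ℝ, Measurable f → (∃ M : ℝ, ∀ x, |f x| ≤ M) →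
      ∫ x, f x ∂ρ = ∫ x, (Nat.card (r ⁻¹' {x}) : ℝ)⁻¹ * ∑' y : r ⁻¹' {x}, f y.1 ∂ρ)
    {p : ℕ} (hp : 0 < p) (xc : ZMod p → X) (hxc : Function.Injective xc)
    (hcyc : ∀ i : ZMod p, r (xc (i + 1)) = xc i)
    (lamC : Measure (Solenoid r))
    (hlam : ∀ F : Solenoid r → ℝ≥0∞, Measurable F →
      ∫⁻ z, F z ∂lamC = ∫⁻ x, ∑' ω : NC r xc x, F ω.1 ∂ρ)
    (α : ZMod p → ℂ) (hα : ∀ i, ‖α i‖ = 1)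
    (ι : Solenoid r → ZMod p)
    (hι : ∀ x : X, ∀ ω ∈ NC r xc x,
      Tendsto (fun n : ℕ => ω.1 ((p : ℤ) * (n : ℤ))) atTop (𝓝 (xc (ι ω))))
    (hrep : ∀ i : ZMod p, ∃ c δ : ℝ, 0 < c ∧ c < 1 ∧ 0 < δ ∧ ∀ x : X,
      0 < dist x (xc i) → dist x (xc i) < δ → c⁻¹ * dist x (xc i) < dist (r^[p] x) (xc i))
    (hrc : ∀ i : ZMod p, ContinuousAt r (xc i))
    (hcc : ∀ i : ZMod p, ∀ᶠ y in 𝓝 (xc i), Nat.card (r ⁻¹' {y}) = Nat.card (r ⁻¹' {xc i}))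
    (m0 : X → ℂ) (hm0m : Measurable m0) (hm0b : ∃ M : ℝ, ∀ x, ‖m0 x‖ ≤ M)
    (β : ℝ → ℝ) (hβmono : MonotoneOn β (Set.Ici 0)) (hβ0 : ∀ t : ℝ, 0 ≤ t → 0 ≤ β t)
    (hβsum : ∀ A : ℝ, 0 < A → ∀ c : ℝ, 0 < c → c < 1 →
      Summable fun k : ℕ => β (A * c ^ (k + 1)))
    (hβlip : ∀ i : ZMod p, ∀ᶠ y in 𝓝 (xc i), ‖m0 y - m0 (xc i)‖ ≤ β (dist y (xc i)))
    (hqmf : ∀ x : X,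
      (Nat.card (r ⁻¹' {x}) : ℝ)⁻¹ * ∑' y : r ⁻¹' {x}, ‖m0 y.1‖ ^ 2 = 1)
    (hlp : ∀ i : ZMod p, m0 (xc i) = α i * (Real.sqrt (Nat.card (r ⁻¹' {r (xc i)})) : ℂ))
    (U : Lp ℂ 2 lamC ≃ₗᵢ[ℂ] Lp ℂ 2 lamC)
    (hU : ∀ ξ : Lp ℂ 2 lamC, ⇑(U ξ) =ᵐ[lamC]
      fun z => α (ι z) * (Real.sqrt (Nat.card (r ⁻¹' {r (z.1 0)})) : ℂ) * ξ (shiftHat r z))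
    (π : (X → ℂ) → (Lp ℂ 2 lamC →L[ℂ] Lp ℂ 2 lamC))
    (hπ : ∀ f : X → ℂ, Measurable f → (∃ M : ℝ, ∀ x, ‖f x‖ ≤ M) →
      ∀ ξ : Lp ℂ 2 lamC, ⇑(π f ξ) =ᵐ[lamC] fun z => f (z.1 0) * ξ z)
    (φ : Lp ℂ 2 lamC) (hφ : ⇑φ =ᵐ[lamC] scalingFn r α ι m0) :
    ∀ μh : Measure X,
      μh = ρ.withDensity (fun x =>
        ENNReal.ofReal (∑' ω : NC r xc x, ‖scalingFn r α ι m0 ω.1‖ ^ 2)) →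
      ∀ V0 : Set (Lp ℂ 2 lamC),
        V0 = closure {ξ : Lp ℂ 2 lamC |
          ∃ f : X → ℂ, Measurable f ∧ (∃ M : ℝ, ∀ x, ‖f x‖ ≤ M) ∧ ξ = π f φ} →
        ∃ J : Lp ℂ 2 μh →ₗᵢ[ℂ] Lp ℂ 2 lamC,
          (∀ f : X → ℂ, Measurable f → (∃ M : ℝ, ∀ x, ‖f x‖ ≤ M) →
            ∀ g : Lp ℂ 2 μh, ⇑g =ᵐ[μh] f → J g = π f φ) ∧
          Set.range (fun g : Lp ℂ 2 μh => J g) = V0 ∧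
          (∀ g g' : Lp ℂ 2 μh,
            ⇑g' =ᵐ[μh] (fun x => m0 x * g (r x)) → U (J g) = J g') := by
  have hpos : NeZero p := ⟨hp.ne'⟩
  have hmc : ∀ i, ContinuousAt m0 (xc i) := fun i => m0_cont hβmono hβsum (hβlip i)
  have hinj := local_inj hp hfin hne hcyc hrc hcc hmc hα hqmf hlp
  have hmult : ∀ x, ∀ ω ∈ NC r xc x, Multipliable fun k : ℕ =>
      (α (ι ω + ((k + 1 : ℕ) : ZMod p)))⁻¹ * m0 (ω.1 ((k : ℤ) + 1)) /
      (Real.sqrt (Nat.card (r ⁻¹' {r (ω.1 ((k : ℤ) + 1))})) : ℂ) := fun x ω hω =>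
    mult_factors hp hfin hne hcyc hrc hcc hα hlp hrep hβmono hβ0 hβsum hβlip ω (ι ω) (hι x ω hω)
  have hproj : ∀ G : Set (Solenoid r), MeasurableSet G →
      NullMeasurableSet {x | ∃ ω ∈ NC r xc x, ω ∈ G} ρ := fun G hG =>
    proj_null hp hr hfin hne hsi hcyc hrc hinj hG
  have hN : ∀ᵐ z ∂lamC, ∃ x, z ∈ NC r xc x := by
    have h1 : lamC {z : Solenoid r | ∃ i : ZMod p,
        Tendsto (fun n : ℕ => z.1 ((p : ℤ) * (n : ℤ))) atTop (𝓝 (xc i))}ᶜ = 0 := by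
      refine null_transfer' hlam (measN hp).compl (ae_of_all _ fun x ω hω => ?_)
      simpa using hω.2
    have h2 : ∀ᵐ z ∂lamC, z ∈ {z : Solenoid r | ∃ i : ZMod p,
        Tendsto (fun n : ℕ => z.1 ((p : ℤ) * (n : ℤ))) atTop (𝓝 (xc i))} := h1
    filter_upwards [h2] with z hz
    exact ⟨z.1 0, rfl, hz⟩
  have hshiftNC : ∀ x, ∀ ω ∈ NC r xc x, shiftHat r ω ∈ NC r xc (r x) ∧
      ι (shiftHat r ω) = ι ω - 1 := by
    intro x ω hω
    have ht := shift_NC hcyc hrc (hι x ω hω)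
    have h0 : shiftHat r ω ∈ NC r xc (r x) := by
      refine ⟨?_, _, ht⟩
      have := ω.2 (-1)
      rw [← hω.1]
      simpa [shiftHat] using this.symm
    exact ⟨h0, hxc (tendsto_nhds_unique (hι _ _ h0) ht)⟩
  have hquasi : ∀ P : Solenoid r → Prop, (∀ᵐ z ∂lamC, P z) → ∀ᵐ z ∂lamC, P (shiftHat r z) := by
    intro P hP
    obtain ⟨G, hPG, hG, h0⟩ := exists_measurable_superset_of_null (ae_iff.1 hP)
    have h1 : ∀ᵐ z ∂lamC, z ∉ G := by rw [ae_iff]; simpa using h0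
    have h2 := null_transfer hlam hproj h1
    have h3 : ∀ᵐ x ∂ρ, ∀ ω ∈ NC r xc (r x), ω ∉ G := by
      have := preimage_null hr hfin hne hsi (ae_iff.1 h2)
      exact this
    have h4 : lamC (shiftHat r ⁻¹' G) = 0 := by
      refine null_transfer' hlam (meas_shift hG) ?_
      filter_upwards [h3] with x hx ω hω
      exact hx _ (hshiftNC x ω hω).1
    rw [ae_iff]
    have h5 : {a | ¬ P (shiftHat r a)} ⊆ shiftHat r ⁻¹' G := by
      intro z hz
      have hz' : shiftHat r z ∈ {a | ¬ P a} := hz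
      exact hPG hz'
    exact measure_mono_null h5 h4
  intro μh hμh V0 hV0
  have hq : Measurable fun z : Solenoid r => z.1 0 := meas_eval 0
  have hμ : μh = (lamC.withDensity fun z => ‖φ z‖ₑ ^ 2).map (fun z : Solenoid r => z.1 0) := by
    have hφN := null_transfer hlam hproj hφ
    ext S hS
    rw [hμh, withDensity_apply _ hS, Measure.map_apply hq hS, withDensity_apply _ (hq hS),
      ← lintegral_indicator hS, ← lintegral_indicator (hq hS),
      hlam _ ((phi_meas φ).indicator (hq hS))]
    refine lintegral_congr_ae ?_
    filter_upwards [hφN] with x hx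
    have hsum : Summable fun ω : NC r xc x => ‖scalingFn r α ι m0 ω.1‖ ^ 2 := by
      refine summable_of_sum_le (c := 1) (fun _ => by positivity) fun T => ?_
      have := sum_phi_le hfin hqmf hα (ι := ι) x (T.map (Function.Embedding.subtype _))
        (fun z hz => by
          obtain ⟨ω, -, rfl⟩ := Finset.mem_map.1 hz
          exact ω.2.1)
        (fun z hz => by
          obtain ⟨ω, -, rfl⟩ := Finset.mem_map.1 hz
          exact hmult x ω.1 ω.2)
      rwa [Finset.sum_map] at this
    by_cases hxS : x ∈ S
    · rw [Set.indicator_of_mem hxS, ENNReal.ofReal_tsum_of_nonneg (fun _ => by positivity) hsum]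
      refine tsum_congr fun ω => ?_
      rw [Set.indicator_of_mem (by simpa [ω.2.1] using hxS), hx ω.1 ω.2,
        ENNReal.ofReal_pow (norm_nonneg _), ofReal_norm]
    · rw [Set.indicator_of_notMem hxS]
      symm
      rw [ENNReal.tsum_eq_zero]
      intro ω
      rw [Set.indicator_of_notMem (by simpa [ω.2.1] using hxS)]
  have hfinμ : IsFiniteMeasure μh := by
    constructor
    rw [hμ, Measure.map_apply hq MeasurableSet.univ, Set.preimage_univ,
      withDensity_apply _ MeasurableSet.univ, Measure.restrict_univ]
    have := lintegral_rpow_enorm_lt_top_of_eLpNorm_lt_top two_ne_zero ENNReal.ofNat_ne_top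
      (Lp.eLpNorm_lt_top φ)
    simpa using this
  obtain ⟨J, hJ⟩ := exists_J hq hμ
  have hJ1 : ∀ f : X → ℂ, Measurable f → (∃ M : ℝ, ∀ x, ‖f x‖ ≤ M) →
            ∀ g : Lp ℂ 2 μh, ⇑g =ᵐ[μh] f → J g = π f φ := by
    intro f hf hb g hg
    apply Lp.ext
    exact (hJ g).trans ((ae_pull hq hμ hg).trans (hπ f hf hb φ).symm)
  refine ⟨J, hJ1, ?_, ?_⟩
  · rw [hV0]
    apply Set.Subset.antisymm
    · have hd := Lp.simpleFunc.denseRange (E := ℂ) (μ := μh) (p := 2) ENNReal.ofNat_ne_top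
      rintro _ ⟨g, rfl⟩
      have h1 : J g ∈ closure (J '' (Set.range ((↑) : Lp.simpleFunc ℂ 2 μh → Lp ℂ 2 μh))) :=
        image_closure_subset_closure_image J.continuous ⟨g, hd g, rfl⟩
      refine closure_mono ?_ h1
      rintro _ ⟨_, ⟨s, rfl⟩, rfl⟩
      have hb : ∃ M : ℝ, ∀ x, ‖Lp.simpleFunc.toSimpleFunc s x‖ ≤ M := 
        SimpleFunc.exists_forall_norm_le _
      refine ⟨Lp.simpleFunc.toSimpleFunc s, (Lp.simpleFunc.toSimpleFunc s).measurable, hb, ?_⟩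
      exact hJ1 _ (Lp.simpleFunc.toSimpleFunc s).measurable hb _
        (Lp.simpleFunc.toSimpleFunc_eq_toFun s).symm
    · have hcl : IsClosed (Set.range (fun g : Lp ℂ 2 μh => J g)) :=
        J.isometry.isClosedEmbedding.isClosed_range
      refine closure_minimal ?_ hcl
      rintro _ ⟨f, hf, ⟨M, hM⟩, rfl⟩
      have hmem : MemLp f 2 μh := MemLp.of_bound hf.aestronglyMeasurable M (ae_of_all _ hM)
      exact ⟨hmem.toLp f, hJ1 f hf ⟨M, hM⟩ _ hmem.coeFn_toLp⟩
  · intro g g' hg'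
    apply Lp.ext
    filter_upwards [hU (J g), hJ g', ae_pull hq hμ hg', hquasi _ (hJ g), hquasi _ hφ, hφ, hN]
      with z h1 h2 h3 h4 h5 h6 h7
    obtain ⟨x, hz⟩ := h7
    obtain ⟨hs1, hs2⟩ := hshiftNC x z hz
    rw [h1, h2, h3, h4, h5, h6]
    have hz1 : (shiftHat r z).1 0 = r (z.1 0) := by rw [hs1.1, hz.1]
    have hsc : ∀ k : ℕ, (shiftHat r z).1 ((k : ℤ) + 1) = z.1 (k : ℤ) := by
      intro k; simp [shiftHat]
    have key : scalingFn r α ι m0 (shiftHat r z) =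
        (α (ι z))⁻¹ * m0 (z.1 0) / (Real.sqrt (Nat.card (r ⁻¹' {r (z.1 0)})) : ℂ) *
          scalingFn r α ι m0 z := by
      unfold scalingFn
      simp only [hsc, hs2]
      have e : ∀ k : ℕ, ι z - 1 + ((k + 1 : ℕ) : ZMod p) = ι z + k := by
        intro k; push_cast; ring
      simp only [e]
      rw [tprod_eq_zero_mul']
      · simp
      · simpa using hmult x z hz
    rw [hz1, key]
    have hc := card_fib_pos hfin hne (r (z.1 0))
    have hsq : 1 ≤ Real.sqrt (Nat.card (r ⁻¹' {r (z.1 0)})) := Real.one_le_sqrt.2 hc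
    have hα0 : α (ι z) ≠ 0 := fun h0 => by
      have := hα (ι z); rw [h0] at this; simp at this
    have hsq0 : (Real.sqrt (Nat.card (r ⁻¹' {r (z.1 0)})) : ℂ) ≠ 0 := by
      rw [Complex.ofReal_ne_zero]; linarith
    field_simp
end
end
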